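/- arXiv:1305.2897 — 3 statements merged into one kernel-verified Lean document; each statement's English description precedes it below -/
import Mathlib

section
/- Let f_δ(t) = e^{−t²/2} e(δt) for t > 0, where δ ∈ ℝ, and let F_δ = M f_δ be its Mellin transform. Let s = σ + iτ with σ ∈ [0,1] and |τ| ≥ max(100, 4π²|δ|). Then for each integer k with 0 ≤ k ≤ 2, |F_δ(s+k)| + |F_δ(k+1−s)| ≤ c_k · (|τ|/(2π|δ|))^k · e^{−0.1065(τ/(πδ))²} if |τ| < (3/2)(πδ)², and |F_δ(s+k)| + |F_δ(k+1−s)| ≤ c_k · |τ|^{k/2} · e^{−0.1598|τ|} if |τ| ≥ (3/2)(πδ)², where c₀ = 4.226, c₁ = 3.516, c₂ = 3.262. -/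
open MeasureTheory Set

/-- `e(t) = e^{2πit}`. -/
noncomputable def e2pi (t : ℝ) : ℂ := Complex.exp (2 * Real.pi * Complex.I * t)

/-- `F_δ`, the Mellin transform of the twisted Gaussian `f_δ(t) = e^{-t²/2} e(δt)`. -/
noncomputable def Fdelta (δ : ℝ) (s : ℂ) : ℂ :=
  mellin (fun t => (Real.exp (-t^2 / 2) : ℂ) * e2pi (δ * t)) s

/-- The constants `c₀ = 4.226`, `c₁ = 3.516`, `c₂ = 3.262`. -/
noncomputable def ckconst (k : ℕ) : ℝ := if k = 0 then 4.226 else if k = 1 then 3.516 else 3.262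

open Filter Topology

lemma int_exp_subst {E : Type*} [NormedAddCommGroup E] [NormedSpace ℝ E] (g : ℝ → E) :
    ∫ x in Ioi (0:ℝ), g x = ∫ v : ℝ, Real.exp v • g (Real.exp v) := by
  have h := integral_image_eq_integral_abs_deriv_smul (s := univ) (f := Real.exp) (f' := Real.exp)
    MeasurableSet.univ (fun x _ => (Real.hasDerivAt_exp x).hasDerivWithinAt)
    (Real.exp_injective.injOn) g
  simpa [image_univ, Real.range_exp, abs_of_pos (Real.exp_pos _)] using h

lemma intble_exp_subst {E : Type*} [NormedAddCommGroup E] [NormedSpace ℝ E] (g : ℝ → E) :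
    IntegrableOn g (Ioi (0:ℝ)) ↔ Integrable (fun v : ℝ => Real.exp v • g (Real.exp v)) := by
  have h := integrableOn_image_iff_integrableOn_abs_deriv_smul (s := univ) (f := Real.exp)
    (f' := Real.exp)
    MeasurableSet.univ (fun x _ => (Real.hasDerivAt_exp x).hasDerivWithinAt)
    (Real.exp_injective.injOn) g
  simpa [image_univ, Real.range_exp, abs_of_pos (Real.exp_pos _)] using h

noncomputable def HH (δ : ℝ) (s z : ℂ) : ℂ :=
  Complex.exp (s * z - Complex.exp (2 * z) / 2 + 2 * Real.pi * Complex.I * δ * Complex.exp z)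

lemma HH_eq (δ : ℝ) (s : ℂ) (v : ℝ) :
    Real.exp v • (((Real.exp v : ℝ) : ℂ) ^ (s - 1) •
      ((Real.exp (-(Real.exp v)^2 / 2) : ℂ) * e2pi (δ * Real.exp v))) = HH δ s v := by
  unfold HH e2pi
  rw [Complex.cpow_def_of_ne_zero (by exact_mod_cast (Real.exp_pos v).ne'),
    ← Complex.ofReal_log (Real.exp_pos v).le, Real.log_exp, Complex.real_smul, smul_eq_mul]
  push_cast
  have h2 : Complex.exp (2 * (v:ℂ)) = Complex.exp v ^ 2 := by rw [two_mul, Complex.exp_add]; ring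
  rw [← Complex.exp_add, ← Complex.exp_add, ← Complex.exp_add, h2]
  congr 1
  ring

lemma Fdelta_eq (δ : ℝ) (s : ℂ) : Fdelta δ s = ∫ v : ℝ, HH δ s v := by
  unfold Fdelta mellin
  rw [int_exp_subst]
  exact integral_congr_ae (Eventually.of_forall fun v => HH_eq δ s v)

lemma HH_norm (δ p T v y : ℝ) :
    ‖HH δ (p + T * Complex.I) (v + y * Complex.I)‖ =
      Real.exp (p * v - T * y - Real.exp (2 * v) * Real.cos (2 * y) / 2
        - 2 * Real.pi * δ * Real.exp v * Real.sin y) := by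
  unfold HH
  rw [Complex.norm_exp]
  have h1 : (Complex.exp (2 * (v + y * Complex.I))).re = Real.exp (2 * v) * Real.cos (2 * y) := by
    rw [Complex.exp_re]; simp
  have h2 : (Complex.exp ((v + y * Complex.I))).im = Real.exp v * Real.sin y := by
    rw [Complex.exp_im]; simp
  have h3 : (2 * (Real.pi:ℂ) * Complex.I * δ * Complex.exp (v + y * Complex.I)).re
      = - (2 * Real.pi * δ * (Complex.exp (v + y * Complex.I)).im) := by
    simp [Complex.mul_re, Complex.mul_im]
  have h4 : (Complex.exp (2 * (v + y * Complex.I)) / 2).re = 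
     (Complex.exp (2 * (v + y * Complex.I))).re / 2 := by
    simp
  rw [Complex.add_re, Complex.sub_re, h3, h4, h1, h2]
  congr 1
  simp
  ring

lemma HH_diff (δ : ℝ) (s : ℂ) : Differentiable ℂ (HH δ s) := by
  unfold HH; fun_prop

/-- dominating function -/
noncomputable def DD (p a b v : ℝ) : ℝ := Real.exp (p * v - a * Real.exp (2 * v) + b * Real.exp v)

lemma DD_integrable {p a : ℝ} (b : ℝ) (hp : 0 < p) (ha : 0 < a) : Integrable (DD p a b) := by
  have h1 := integrableOn_rpow_mul_exp_neg_mul_sq (b := a / 2) (by positivity) (s := p - 1)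
    (by linarith)
  rw [intble_exp_subst] at h1
  refine (h1.const_mul (Real.exp (b^2 / (2 * a)))).mono'
    (by unfold DD; exact (by fun_prop : Continuous _).aestronglyMeasurable) ?_
  refine Eventually.of_forall fun v => ?_
  rw [DD, Real.norm_of_nonneg (Real.exp_pos _).le, ← Real.exp_mul, smul_eq_mul, ← Real.exp_add,
    ← Real.exp_add, ← Real.exp_add]
  apply Real.exp_le_exp.2
  have h2 : Real.exp (2 * v) = Real.exp v ^ 2 := by rw [two_mul, Real.exp_add]; ring
  rw [h2]
  have h3 : b * Real.exp v ≤ b^2/(2*a) + a/2 * Real.exp v^2 := by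
    have : b^2/(2*a) + a/2 * Real.exp v^2 - b * Real.exp v = (b - a * Real.exp v)^2/(2*a) := by
      field_simp; ring
    have h5 : 0 ≤ (b - a * Real.exp v)^2/(2*a) := by positivity
    linarith
  linarith

lemma DD_bot {p a : ℝ} (b : ℝ) (hp : 0 < p) : Tendsto (DD p a b) atBot (𝓝 0) := by
  unfold DD
  apply Real.tendsto_exp_atBot.comp
  have h1 : Tendsto (fun v : ℝ => p * v) atBot atBot := tendsto_id.const_mul_atBot hp
  have h2 : Tendsto (fun v : ℝ => - a * Real.exp (2 * v) + b * Real.exp v) atBot (𝓝 (-a * 0 + b * 0)) := by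
    refine ((Real.tendsto_exp_atBot.comp (tendsto_id.const_mul_atBot two_pos)).const_mul _).add
      (Real.tendsto_exp_atBot.const_mul _)
  refine (h1.atBot_add h2).congr fun v => ?_
  ring

lemma DD_top {p a : ℝ} (b : ℝ) (hp : 0 < p) (ha : 0 < a) : Tendsto (DD p a b) atTop (𝓝 0) := by
  unfold DD
  apply Real.tendsto_exp_atBot.comp
  -- p v ≤ p e^v ; quadratic in e^v
  have h1 : Tendsto (fun x : ℝ => x * ((p + b) - a * x)) atTop atBot := by
    apply tendsto_id.atTop_mul_atBot₀
    have h0 : Tendsto (fun x : ℝ => (-a) * x) atTop atBot :=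
      tendsto_id.const_mul_atTop_of_neg (by linarith)
    exact ((tendsto_const_nhds (x := p + b)).add_atBot h0).congr (fun x => by ring)
  refine tendsto_atBot_mono (fun v => ?_) (h1.comp Real.tendsto_exp_atTop)
  have h2 : Real.exp (2 * v) = Real.exp v ^ 2 := by rw [two_mul, Real.exp_add]; ring
  have h3 := Real.add_one_le_exp v
  simp only [Function.comp, h2]
  nlinarith

lemma HH_le (δ p T θ v y : ℝ) (hθ : |θ| < Real.pi / 4) (hy : |y| ≤ |θ|) :
    ‖HH δ (p + T * Complex.I) (v + y * Complex.I)‖ ≤ Real.exp (|T| * |θ|) *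
      DD p (Real.cos (2 * θ) / 2) (2 * Real.pi * |δ|) v := by
  rw [HH_norm, DD, ← Real.exp_add]
  apply Real.exp_le_exp.2
  have h1 : Real.cos (2 * θ) ≤ Real.cos (2 * y) := by
    rw [← Real.cos_abs (2 * θ), ← Real.cos_abs (2 * y), abs_mul, abs_mul, abs_two]
    exact Real.cos_le_cos_of_nonneg_of_le_pi (by positivity) (by linarith [Real.pi_pos]) (by linarith)
  have h2 : -(T * y) ≤ |T| * |θ| := by
    calc -(T * y) ≤ |T * y| := neg_le_abs _
      _ = |T| * |y| := abs_mul _ _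
      _ ≤ _ := by gcongr
  have h3 : -(2 * Real.pi * δ * Real.exp v * Real.sin y) ≤ 2 * Real.pi * |δ| * Real.exp v := by
    calc -(2 * Real.pi * δ * Real.exp v * Real.sin y) ≤ |2 * Real.pi * δ * Real.exp v * Real.sin y| := neg_le_abs _
      _ = 2 * Real.pi * |δ| * Real.exp v * |Real.sin y| := by
        simp [abs_mul, abs_of_pos Real.pi_pos]
      _ ≤ 2 * Real.pi * |δ| * Real.exp v * 1 := by
        gcongr; exact Real.abs_sin_le_one y
      _ = _ := by ring
  have h4 : Real.exp (2 * v) * Real.cos (2 * θ) ≤ Real.exp (2 * v) * Real.cos (2 * y) := by gcongr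
  linarith

lemma cos_pos' {θ : ℝ} (hθ : |θ| < Real.pi / 4) : 0 < Real.cos (2 * θ) := by
  have := abs_lt.1 hθ
  exact Real.cos_pos_of_mem_Ioo ⟨by linarith, by linarith⟩

lemma HH_integrable (δ p T θ : ℝ) (hp : 0 < p) (hθ : |θ| < Real.pi / 4) :
    Integrable (fun v : ℝ => HH δ (p + T * Complex.I) (v + θ * Complex.I)) := by
  refine ((DD_integrable (2 * Real.pi * |δ|) hp (half_pos (cos_pos' hθ))).const_mul
    (Real.exp (|T| * |θ|))).mono' ?_ (Eventually.of_forall fun v => HH_le δ p T θ v θ hθ le_rfl)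
  exact ((HH_diff δ _).continuous.comp (by fun_prop)).aestronglyMeasurable

lemma vert_tendsto (δ p T θ : ℝ) (hθ : |θ| < Real.pi / 4) (l : Filter ℝ)
    (hl : Tendsto (DD p (Real.cos (2 * θ) / 2) (2 * Real.pi * |δ|)) l (𝓝 0)) :
    Tendsto (fun R : ℝ => ∫ y : ℝ in (0:ℝ)..θ, HH δ (p + T * Complex.I) (R + y * Complex.I)) l (𝓝 0) := by
  have h := (hl.const_mul (Real.exp (|T| * |θ|))).mul_const |θ - 0|
  simp only [mul_zero, zero_mul] at h
  refine squeeze_zero_norm (fun R => ?_) h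
  refine intervalIntegral.norm_integral_le_of_norm_le_const fun y hy => ?_
  refine HH_le δ p T θ R y hθ ?_
  rcases le_total 0 θ with h0 | h0
  · rw [uIoc_of_le h0] at hy
    rw [abs_of_pos hy.1, abs_of_nonneg h0]; exact hy.2
  · rw [uIoc_of_ge h0] at hy
    rw [abs_of_nonpos hy.2, abs_of_nonpos h0]; linarith [hy.1]

lemma shift (δ p T θ : ℝ) (hp : 0 < p) (hθ : |θ| < Real.pi / 4) :
    Fdelta δ (p + T * Complex.I) = ∫ v : ℝ, HH δ (p + T * Complex.I) (v + θ * Complex.I) := by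
  rw [Fdelta_eq]
  set s : ℂ := p + T * Complex.I
  have hi0 : Integrable (fun v : ℝ => HH δ s v) := by
    have := HH_integrable δ p T 0 hp (by simp [Real.pi_pos])
    simpa using this
  have hi1 : Integrable (fun v : ℝ => HH δ s (v + θ * Complex.I)) := HH_integrable δ p T θ hp hθ
  have t0 := intervalIntegral_tendsto_integral hi0 tendsto_neg_atTop_atBot tendsto_id
  have t1 := intervalIntegral_tendsto_integral hi1 tendsto_neg_atTop_atBot tendsto_id
  have v1 := vert_tendsto δ p T θ hθ atTop (DD_top _ hp (half_pos (cos_pos' hθ)))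
  have v2 := (vert_tendsto δ p T θ hθ atBot (DD_bot _ hp)).comp tendsto_neg_atTop_atBot
  have key : ∀ R : ℝ, (∫ x : ℝ in (-R)..R, HH δ s x) - (∫ x : ℝ in (-R)..R, HH δ s (x + θ * Complex.I)) +
      Complex.I • (∫ y : ℝ in (0:ℝ)..θ, HH δ s (R + y * Complex.I)) -
      Complex.I • (∫ y : ℝ in (0:ℝ)..θ, HH δ s ((-R : ℝ) + y * Complex.I)) = 0 := by
    intro R
    have := Complex.integral_boundary_rect_eq_zero_of_differentiableOn (HH δ s) (-R : ℝ) (R + θ * Complex.I)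
      (HH_diff δ s).differentiableOn
    simpa using this
  have := ((t0.sub t1).add (v1.const_smul Complex.I)).sub (v2.const_smul Complex.I)
  have h0 := tendsto_nhds_unique (this.congr key) tendsto_const_nhds
  simpa [sub_eq_zero] using h0

lemma recur (δ p T : ℝ) (hp : 0 < p) :
    (p + T * Complex.I) * Fdelta δ (p + T * Complex.I) =
      Fdelta δ ((p + 2 : ℝ) + T * Complex.I) -
        2 * Real.pi * Complex.I * δ * Fdelta δ ((p + 1 : ℝ) + T * Complex.I) := by
  have hi : ∀ q : ℝ, 0 < q → Integrable (fun v : ℝ => HH δ (q + T * Complex.I) v) := fun q hq => by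
    have := HH_integrable δ q T 0 hq (by simp [Real.pi_pos])
    simpa using this
  have hz : |(0:ℝ)| < Real.pi / 4 := by simp [Real.pi_pos]
  have hd : ∀ v : ℝ, HasDerivAt (fun v : ℝ => HH δ (p + T * Complex.I) v)
      ((p + T * Complex.I) * HH δ (p + T * Complex.I) v - HH δ ((p + 2 : ℝ) + T * Complex.I) v
        + 2 * Real.pi * Complex.I * δ * HH δ ((p + 1 : ℝ) + T * Complex.I) v) v := by
    intro v
    have h : HasDerivAt (HH δ (p + T * Complex.I)) ((p + T * Complex.I) * HH δ (p + T * Complex.I) v - HH δ ((p + 2 : ℝ) + T * Complex.I) v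
        + 2 * Real.pi * Complex.I * δ * HH δ ((p + 1 : ℝ) + T * Complex.I) v) (v : ℂ) := by
      have e1 : HasDerivAt (fun z : ℂ => Complex.exp (2 * z)) (Complex.exp (2 * (v:ℂ)) * (2 * 1)) (v : ℂ) :=
        ((hasDerivAt_id (v:ℂ)).const_mul 2).cexp
      have e2 := ((((hasDerivAt_id (v:ℂ)).const_mul ((p:ℂ) + T * Complex.I)).sub (e1.div_const 2)).add
        ((Complex.hasDerivAt_exp (v:ℂ)).const_mul (2 * Real.pi * Complex.I * δ))).cexp
      refine e2.congr_deriv ?_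
      have f2 : HH δ ((p + 2 : ℝ) + T * Complex.I) v = HH δ (p + T * Complex.I) v * Complex.exp (2 * v) := by
        unfold HH; rw [← Complex.exp_add]; congr 1; push_cast; ring
      have f1 : HH δ ((p + 1 : ℝ) + T * Complex.I) v = HH δ (p + T * Complex.I) v * Complex.exp v := by
        unfold HH; rw [← Complex.exp_add]; congr 1; push_cast; ring
      rw [f1, f2]
      simp only [HH, id, Pi.add_apply, Pi.sub_apply]
      ring
    exact h.comp_ofReal
  have ht : ∀ l : Filter ℝ, Tendsto (DD p (Real.cos (2 * 0) / 2) (2 * Real.pi * |δ|)) l (𝓝 0) →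
      Tendsto (fun v : ℝ => HH δ (p + T * Complex.I) v) l (𝓝 0) := by
    intro l hl
    have h := (hl.const_mul (Real.exp (|T| * |0|)))
    simp only [mul_zero] at h
    refine squeeze_zero_norm (fun R => ?_) h
    have := HH_le δ p T 0 R 0 hz le_rfl
    simpa using this
  have h2 := hi (p + 2) (by linarith)
  have h1 := hi (p + 1) (by linarith)
  have h0 := hi p hp
  have := integral_of_hasDerivAt_of_tendsto hd
    (((h0.const_mul _).sub h2).add (h1.const_mul _))
    (ht _ (DD_bot _ hp)) (ht _ (DD_top _ hp (half_pos (cos_pos' hz))))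
  have e1 := integral_add ((h0.const_mul (p + T * Complex.I)).sub h2)
    (h1.const_mul (2 * Real.pi * Complex.I * δ))
  simp only [Pi.sub_apply] at e1
  rw [e1, integral_sub (h0.const_mul _) h2,
    integral_const_mul, integral_const_mul, ← Fdelta_eq, ← Fdelta_eq, ← Fdelta_eq] at this
  linear_combination this

lemma Fdelta_zero_re (δ T : ℝ) : Fdelta δ ((0:ℝ) + T * Complex.I) = 0 := by
  unfold Fdelta mellin
  apply integral_undef
  intro h
  have h1 : IntegrableOn (fun x : ℝ => x⁻¹ * Real.exp (-x^2/2)) (Ioc 0 1) := by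
    refine (IntegrableOn.mono_set (Integrable.norm h) Ioc_subset_Ioi_self).congr_fun (fun x hx => ?_) measurableSet_Ioc
    have hx0 : 0 < x := hx.1
    simp only [norm_smul, norm_mul]
    rw [Complex.norm_cpow_eq_rpow_re_of_pos hx0]
    have : ‖e2pi (δ * x)‖ = 1 := by
      unfold e2pi
      rw [Complex.norm_exp]; simp
    rw [this]
    simp [Real.rpow_neg_one, -Complex.ofReal_exp, abs_of_pos (Real.exp_pos _)]
  have h2 : IntegrableOn (fun x : ℝ => x⁻¹) (Ioc 0 1) := by
    refine (h1.const_mul (Real.exp 1)).mono' (by fun_prop) ?_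
    refine (ae_restrict_iff' measurableSet_Ioc).2 (Eventually.of_forall fun x hx => ?_)
    have hx0 : 0 < x := hx.1
    rw [Real.norm_of_nonneg (by positivity), mul_left_comm, ← Real.exp_add]
    have : 1 ≤ Real.exp (1 + -x^2/2) := Real.one_le_exp (by nlinarith [hx.2])
    exact le_mul_of_one_le_right (by positivity) this
  have h3 := (intervalIntegrable_iff_integrableOn_Ioc_of_le zero_le_one).2 h2
  simp at h3

lemma recur_le (δ p T : ℝ) (hp : 0 ≤ p) (hT : T ≠ 0) :
    ‖Fdelta δ (p + T * Complex.I)‖ ≤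
      (‖Fdelta δ ((p + 2 : ℝ) + T * Complex.I)‖ + 
        2 * Real.pi * |δ| * ‖Fdelta δ ((p + 1 : ℝ) + T * Complex.I)‖) / |T| := by
  have hTp : 0 < |T| := abs_pos.2 hT
  rcases hp.eq_or_lt with h | h
  · subst h
    rw [Fdelta_zero_re, norm_zero]
    have := Real.pi_pos
    positivity
  rw [le_div_iff₀ hTp]
  have h1 : |T| ≤ ‖(p + T * Complex.I : ℂ)‖ := by
    simpa using Complex.abs_im_le_norm (p + T * Complex.I : ℂ)
  calc _ ≤ ‖Fdelta δ (p + T * Complex.I)‖ * ‖(p + T * Complex.I : ℂ)‖ := by gcongr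
    _ = ‖(p + T * Complex.I) * Fdelta δ (p + T * Complex.I)‖ := by rw [norm_mul, mul_comm]
    _ ≤ _ := by
      rw [recur δ p T h]
      refine (norm_sub_le _ _).trans (le_of_eq ?_)
      simp [abs_of_pos Real.pi_pos]

lemma gauss_int {c : ℝ} (hc : 0 < c) (α β γ : ℝ) :
    Integrable (fun u : ℝ => (α + β * u + γ * u^2) * Real.exp (-(c/2) * u^2)) ∧
    ∫ u : ℝ, (α + β * u + γ * u^2) * Real.exp (-(c/2) * u^2) =
      √(2 * Real.pi / c) * (α + γ / c) := by
  have hb : 0 < c / 2 := by positivity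
  have i0 : Integrable (fun u : ℝ => Real.exp (-(c/2) * u^2)) := integrable_exp_neg_mul_sq hb
  have i1 : Integrable (fun u : ℝ => u * Real.exp (-(c/2) * u^2)) := integrable_mul_exp_neg_mul_sq hb
  have i2 : Integrable (fun u : ℝ => u^2 * Real.exp (-(c/2) * u^2)) := by
    have := integrable_rpow_mul_exp_neg_mul_sq hb (s := 2) (by norm_num)
    simpa using this
  have d0 : ∀ u : ℝ, HasDerivAt (fun u : ℝ => Real.exp (-(c/2) * u^2))
      (-c * (u * Real.exp (-(c/2) * u^2))) u := fun u => by
    have := ((hasDerivAt_pow 2 u).const_mul (-(c/2))).exp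
    refine this.congr_deriv ?_
    simp; ring
  have d1 : ∀ u : ℝ, HasDerivAt (fun u : ℝ => u * Real.exp (-(c/2) * u^2))
      (Real.exp (-(c/2) * u^2) + (-c) * (u^2 * Real.exp (-(c/2) * u^2))) u := fun u => by
    refine ((hasDerivAt_id u).mul (d0 u)).congr_deriv ?_
    simp; ring
  have z1 := integral_eq_zero_of_hasDerivAt_of_integrable d0 (i1.const_mul _) i0
  have z2 := integral_eq_zero_of_hasDerivAt_of_integrable d1 (i0.add (i2.const_mul _)) i1
  rw [integral_const_mul] at z1
  rw [integral_add i0 (i2.const_mul _), integral_const_mul] at z2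
  have g0 := integral_gaussian (c/2)
  have g0' : Real.pi / (c/2) = 2 * Real.pi / c := by field_simp
  rw [g0'] at g0
  rw [g0] at z2
  have z1' : ∫ u : ℝ, u * Real.exp (-(c/2) * u^2) = 0 := by
    rcases mul_eq_zero.1 z1 with h | h
    · linarith
    · exact h
  have z2' : ∫ u : ℝ, u^2 * Real.exp (-(c/2) * u^2) = √(2 * Real.pi / c) / c := by
    rw [eq_div_iff hc.ne']; linarith
  have ef : (fun u : ℝ => (α + β * u + γ * u^2) * Real.exp (-(c/2) * u^2)) = fun u : ℝ =>
    (α * Real.exp (-(c/2) * u^2) + β * (u * Real.exp (-(c/2) * u^2))) +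
      γ * (u^2 * Real.exp (-(c/2) * u^2)) := by
    ext u; ring
  have i01 : Integrable (fun u : ℝ => α * Real.exp (-(c/2) * u^2) + β * (u * Real.exp (-(c/2) * u^2))) :=
    (i0.const_mul α).add (i1.const_mul β)
  rw [ef]
  refine ⟨i01.add (i2.const_mul γ), ?_⟩
  rw [integral_add i01 (i2.const_mul γ), integral_add (i0.const_mul α) (i1.const_mul β),
    integral_const_mul, integral_const_mul, integral_const_mul, g0, z1', z2']
  ring

lemma F_bound (δ q T θ X α β γ : ℝ) (hq : 0 ≤ q) (hθ : |θ| < Real.pi / 4) (hX : 0 ≤ X)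
    (hA : -(2 * Real.pi * δ * Real.sin θ) ≤ Real.cos (2 * θ) * X)
    (hw : ∀ x : ℝ, 0 < x → x ^ q ≤ α + β * (x - X) + γ * (x - X)^2)
    (hP : ∀ u : ℝ, 0 ≤ α + β * u + γ * u^2) :
    ‖Fdelta δ ((q + 1 : ℝ) + T * Complex.I)‖ ≤
      Real.exp (-(T * θ) + Real.cos (2 * θ) * X^2 / 2) *
        (√(2 * Real.pi / Real.cos (2 * θ)) * (α + γ / Real.cos (2 * θ))) := by
  have hc := cos_pos' hθ
  rw [shift δ (q+1) T θ (by linarith) hθ]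
  set c := Real.cos (2 * θ) with hcdef
  obtain ⟨gi, gv⟩ := gauss_int hc α β γ
  set K := Real.exp (-(T * θ) + c * X^2 / 2)
  have gi' := gi.comp_sub_right X
  have gv' := gv
  rw [← integral_sub_right_eq_self _ X] at gv'
  set W : ℝ → ℝ := fun x => (α + β * (x - X) + γ * (x - X)^2) * Real.exp (-(c/2) * (x-X)^2) with hW
  have hW0 : ∀ x, 0 ≤ W x := fun x => mul_nonneg (hP _) (Real.exp_pos _).le
  have gi2 : Integrable (fun v : ℝ => Real.exp v • W (Real.exp v)) :=
    (intble_exp_subst W).1 gi'.integrableOn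
  calc _ ≤ ∫ v : ℝ, K * (Real.exp v • W (Real.exp v)) := by
        refine norm_integral_le_of_norm_le (gi2.const_mul K) (Eventually.of_forall fun v => ?_)
        rw [HH_norm]
        have h2 : Real.exp (2 * v) = Real.exp v ^ 2 := by rw [two_mul, Real.exp_add]; ring
        have h3 := hw (Real.exp v) (Real.exp_pos v)
        rw [← Real.exp_mul] at h3
        have h4 := mul_le_mul_of_nonneg_right hA (Real.exp_pos v).le
        calc _ ≤ Real.exp (-(T * θ) + c * X^2/2 + v + v * q + (-(c/2) * (Real.exp v - X)^2)) := by
              apply Real.exp_le_exp.2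
              rw [h2, ← hcdef]
              nlinarith
          _ = K * (Real.exp v * (Real.exp (v * q) * Real.exp (-(c/2) * (Real.exp v - X)^2))) := by
              rw [Real.exp_add, Real.exp_add, Real.exp_add]; ring
          _ ≤ _ := by
              simp only [hW, smul_eq_mul, K]
              gcongr
    _ = K * ∫ x in Ioi (0:ℝ), W x := by rw [integral_const_mul, int_exp_subst]
    _ ≤ K * ∫ x, W x := by
        gcongr
        · exact Eventually.of_forall hW0
        · exact Measure.restrict_le_self
    _ = _ := by rw [gv']

/-- main integrals bounds, in terms of `m ≥ √(2π/c)` and `d ≥ 1/c` -/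
lemma F_bound1 (δ σ T θ X : ℝ) (hσ : σ ∈ Icc (0:ℝ) 1) (hθ : |θ| < Real.pi / 4) (hX : 0 ≤ X)
    (hA : -(2 * Real.pi * δ * Real.sin θ) ≤ Real.cos (2 * θ) * X)
    (hc : 0.84510 ≤ Real.cos (2 * θ)) :
    ‖Fdelta δ ((σ + 1 : ℝ) + T * Complex.I)‖ ≤
      Real.exp (-(T * θ) + Real.cos (2 * θ) * X^2 / 2) *
        ((1 - σ) * 2.73 + σ * (2.73 * X + 3)) ∧
    ‖Fdelta δ ((σ + 2 : ℝ) + T * Complex.I)‖ ≤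
      Real.exp (-(T * θ) + Real.cos (2 * θ) * X^2 / 2) *
        ((1 - σ) * (2.73 * X + 3) + σ * (2.73 * X^2 + 3.25)) := by
  obtain ⟨h0, h1⟩ := hσ
  have hpow : ∀ x : ℝ, 0 < x → x ^ σ ≤ (1 - σ) + σ * x := fun x hx => by
    have := rpow_one_add_le_one_add_mul_self (s := x - 1) (by linarith) h0 h1
    simp only [add_sub_cancel] at this
    linarith
  have hcp : 0 < Real.cos (2 * θ) := by linarith
  have hd : 1 / Real.cos (2 * θ) ≤ 1.18330 := by
    rw [div_le_iff₀ hcp]; linarith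
  have hm : √(2 * Real.pi / Real.cos (2 * θ)) ≤ 2.7268 := by
    rw [Real.sqrt_le_left (by norm_num), div_le_iff₀ hcp]
    nlinarith [Real.pi_lt_d4]
  have hm0 := Real.sqrt_nonneg (2 * Real.pi / Real.cos (2 * θ))
  constructor
  · refine (F_bound δ σ T θ X ((1 - σ) + σ * (X + 1/2)) 0 (σ/2) h0 hθ hX hA ?_ ?_).trans ?_
    · intro x hx
      have := hpow x hx
      nlinarith [mul_nonneg h0 (sq_nonneg (x - X - 1))]
    · intro u
      have : 0 ≤ 1 - σ := by linarith
      simp only [zero_mul, add_zero]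
      positivity
    · gcongr
      have e : σ / 2 / Real.cos (2 * θ) = σ/2 * (1 / Real.cos (2 * θ)) := by ring
      rw [e]
      have h3 : (1 - σ) + σ * (X + 1/2) + σ/2 * (1 / Real.cos (2 * θ)) ≤
         (1 - σ) + σ * (X + 1/2) + σ/2 * 1.18330 := by gcongr
      have hnn : 0 ≤ (1 - σ) + σ * (X + 1/2) + σ/2 * 1.18330 := by
        have : 0 ≤ 1 - σ := by linarith
        positivity
      calc _ ≤ 2.7268 * ((1 - σ) + σ * (X + 1/2) + σ/2 * 1.18330) :=
            mul_le_mul hm h3 (by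
              have : 0 ≤ 1 - σ := by linarith
              positivity) (by norm_num)
        _ ≤ _ := by nlinarith [mul_nonneg h0 hX]
  · have e2 : (σ + 2 : ℝ) = (σ + 1) + 1 := by ring
    rw [e2]
    refine (F_bound δ (σ+1) T θ X ((1 - σ) * (X + 1/2) + σ * X^2) (2*σ*X) ((1-σ)/2 + σ) (by linarith) hθ hX hA ?_ ?_).trans ?_
    · intro x hx
      have := hpow x hx
      rw [Real.rpow_add hx, Real.rpow_one]
      nlinarith [mul_nonneg (sub_nonneg.2 h1) (sq_nonneg (x - X - 1)), mul_le_mul_of_nonneg_right this hx.le]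
    · intro u
      have : 0 ≤ (1 - σ) * (X + 1/2 + u^2/2) := mul_nonneg (by linarith) (by positivity)
      nlinarith [mul_nonneg h0 (sq_nonneg (X + u))]
    · gcongr
      have e : ((1-σ)/2 + σ) / Real.cos (2 * θ) = ((1-σ)/2 + σ) * (1 / Real.cos (2 * θ)) := by ring
      rw [e]
      have h10 : 0 ≤ 1 - σ := by linarith
      have h3 : (1 - σ) * (X + 1/2) + σ * X^2 + ((1-σ)/2 + σ) * (1 / Real.cos (2 * θ)) ≤
         (1 - σ) * (X + 1/2) + σ * X^2 + ((1-σ)/2 + σ) * 1.18330 := by gcongr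
      calc _ ≤ 2.7268 * ((1 - σ) * (X + 1/2) + σ * X^2 + ((1-σ)/2 + σ) * 1.18330) :=
            mul_le_mul hm h3 (by positivity) (by norm_num)
        _ ≤ _ := by nlinarith [mul_nonneg h10 hX, mul_nonneg h0 (sq_nonneg X)]

lemma le_of_sq_le_sq_aux {a b : ℝ} (h : a^2 ≤ b^2) (hb : 0 ≤ b) : a ≤ b := (abs_le.1 (abs_le_of_sq_le_sq h hb)).2

lemma nonneg_of_deriv (f f' : ℝ → ℝ) (h : ∀ x, HasDerivAt f (f' x) x) (h0 : f 0 = 0)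
    (hf : ∀ x, 0 ≤ x → 0 ≤ f' x) (x : ℝ) (hx : 0 ≤ x) : 0 ≤ f x := by
  have : MonotoneOn f (Ici 0) := by
    apply monotoneOn_of_deriv_nonneg (convex_Ici 0)
    · exact fun x _ => (h x).continuousAt.continuousWithinAt
    · exact fun x _ => (h x).differentiableAt.differentiableWithinAt
    · intro x hx
      rw [(h x).deriv]
      rw [interior_Ici] at hx
      exact hf x (le_of_lt hx)
  have := this (mem_Ici.2 le_rfl) (mem_Ici.2 hx) hx
  rwa [h0] at this

lemma cos_ge6 (x : ℝ) (hx : 0 ≤ x) : 1 - x^2/2 + x^4/24 - x^6/720 ≤ Real.cos x := by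
  have s3 : ∀ x : ℝ, 0 ≤ x → 0 ≤ Real.sin x - x + x^3/6 := by
    refine nonneg_of_deriv _ (fun x => Real.cos x - 1 + x^2/2) (fun x => ?_) (by simp) ?_
    · refine (((Real.hasDerivAt_sin x).sub (hasDerivAt_id x)).add ((hasDerivAt_pow 3 x).div_const 6)).congr_deriv ?_
      simp; ring
    · intro x _
      linarith [Real.one_sub_sq_div_two_le_cos (x := x)]
  have c4 : ∀ x : ℝ, 0 ≤ x → 0 ≤ 1 - x^2/2 + x^4/24 - Real.cos x := by
    refine nonneg_of_deriv _ (fun x => Real.sin x - x + x^3/6) (fun x => ?_) (by simp) s3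
    refine ((((hasDerivAt_const x (1:ℝ)).sub ((hasDerivAt_pow 2 x).div_const 2)).add ((hasDerivAt_pow 4 x).div_const 24)).sub (Real.hasDerivAt_cos x)).congr_deriv ?_
    simp; ring
  have s5 : ∀ x : ℝ, 0 ≤ x → 0 ≤ x - x^3/6 + x^5/120 - Real.sin x := by
    refine nonneg_of_deriv _ (fun x => 1 - x^2/2 + x^4/24 - Real.cos x) (fun x => ?_) (by simp) c4
    refine ((((hasDerivAt_id x).sub ((hasDerivAt_pow 3 x).div_const 6)).add ((hasDerivAt_pow 5 x).div_const 120)).sub (Real.hasDerivAt_sin x)).congr_deriv ?_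
    simp; ring
  have c6 : ∀ x : ℝ, 0 ≤ x → 0 ≤ Real.cos x - 1 + x^2/2 - x^4/24 + x^6/720 := by
    refine nonneg_of_deriv _ (fun x => x - x^3/6 + x^5/120 - Real.sin x) (fun x => ?_) (by simp) s5
    refine (((((Real.hasDerivAt_cos x).sub_const 1).add ((hasDerivAt_pow 2 x).div_const 2)).sub ((hasDerivAt_pow 4 x).div_const 24)).add ((hasDerivAt_pow 6 x).div_const 720)).congr_deriv ?_
    simp; ring
  linarith [c6 x hx]

lemma cos_564 (x : ℝ) (h0 : 0 ≤ x) (h1 : x ≤ 0.564) : 0.84510 ≤ Real.cos x := by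
  have h : Real.cos 0.564 ≤ Real.cos x :=
    Real.cos_le_cos_of_nonneg_of_le_pi h0 (by linarith [Real.pi_gt_three]) h1
  have h2 := cos_ge6 0.564 (by norm_num)
  norm_num at h2 ⊢
  linarith

lemma sec_bound (x : ℝ) (h0 : 0 ≤ x) (h1 : x ≤ 0.564) :
    1 - Real.cos x ≤ Real.cos x * (0.5764 * x^2) := by
  have h2 := cos_ge6 x h0
  obtain ⟨u, hu⟩ : ∃ u, u = x^2 := ⟨_, rfl⟩
  have e4 : x^4 = u^2 := by rw [hu]; ring
  have e6 : x^6 = u^3 := by rw [hu]; ring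
  rw [e4, e6, ← hu] at h2
  rw [← hu]
  have hu0 : 0 ≤ u := by rw [hu]; positivity
  have hu1 : u ≤ 0.3181 := by rw [hu]; nlinarith
  have h3 : (1 - u/2 + u^2/24 - u^3/720) * (1 + 0.5764 * u) ≤ Real.cos x * (1 + 0.5764 * u) := by
    gcongr
  have h4 : 0 ≤ 0.0764 - (0.2882 - 1/24) * u + (0.5764/24 - 1/720) * u^2 - 0.5764/720 * u^3 := by
    nlinarith [mul_nonneg hu0 (sub_nonneg.2 hu1), mul_nonneg (sq_nonneg u) (sub_nonneg.2 hu1), sq_nonneg (u - 0.3181)]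
  nlinarith [mul_nonneg hu0 h4]

noncomputable def bk (k : ℕ) : ℝ := if k = 0 then 3.8 else 3

lemma main_k (δ σ T θ X Y : ℝ) (k : ℕ) (hk : k ≤ 2) (hσ : σ ∈ Icc (0:ℝ) 1) (hT : T ≠ 0)
    (h0 : 0 ≤ θ) (h1 : θ ≤ 0.282) (hX : 0 ≤ X)
    (hA : (0 ≤ T * δ ∧ X = 0) ∨ 2 * Real.pi * |δ| * Real.sin θ ≤ Real.cos (2 * θ) * X)
    (a0 : 1 ≤ Y) (a1 : 2.73 * X + 3 ≤ 3 * Y) (a2 : 2.73 * X^2 + 3.25 ≤ 3 * Y^2)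
    (a3 : 2.73 * X + 3 + 2 * Real.pi * |δ| * 2.73 ≤ 3.8 * |T|)
    (a4 : 2.73 * X^2 + 3.25 + 2 * Real.pi * |δ| * (2.73 * X + 3) ≤ 3.8 * |T|) :
    ‖Fdelta δ ((k + σ : ℝ) + T * Complex.I)‖ ≤
      Real.exp (-(|T| * θ) + Real.cos (2 * θ) * X^2 / 2) * (bk k * Y ^ k) := by
  have hpi := Real.pi_gt_three
  have hs : 0 ≤ Real.sin θ := Real.sin_nonneg_of_nonneg_of_le_pi h0 (by linarith)
  have hc := cos_564 (2 * θ) (by linarith) (by linarith)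
  obtain ⟨θ', h2, h3, h4, h5⟩ : ∃ θ', T * θ' = |T| * θ ∧ |θ'| = θ ∧ Real.cos (2 * θ') = Real.cos (2 * θ) ∧
      -(2 * Real.pi * δ * Real.sin θ') ≤ Real.cos (2 * θ) * X := by
    rcases lt_or_gt_of_ne hT with h | h
    · refine ⟨-θ, by rw [abs_of_neg h]; ring, by rw [abs_neg, abs_of_nonneg h0], by simp, ?_⟩
      rw [Real.sin_neg]
      rcases hA with ⟨ha, hb⟩ | ha
      · have hd : δ ≤ 0 := by
          by_contra hcon
          push Not at hcon
          nlinarith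
        rw [hb]
        nlinarith [mul_nonneg (mul_nonneg Real.pi_pos.le (neg_nonneg.2 hd)) hs]
      · have : 2 * Real.pi * δ * Real.sin θ ≤ 2 * Real.pi * |δ| * Real.sin θ := by
          gcongr; exact le_abs_self δ
        linarith
    · refine ⟨θ, by rw [abs_of_pos h], by rw [abs_of_nonneg h0], by simp, ?_⟩
      rcases hA with ⟨ha, hb⟩ | ha
      · have hd : 0 ≤ δ := nonneg_of_mul_nonneg_right ha h
        rw [hb]
        nlinarith [mul_nonneg (mul_nonneg Real.pi_pos.le hd) hs]
      · have : 2 * Real.pi * (-δ) * Real.sin θ ≤ 2 * Real.pi * |δ| * Real.sin θ := by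
          gcongr; exact neg_le_abs δ
        linarith
  have hb := F_bound1 δ σ T θ' X hσ (by rw [h3]; linarith) hX (by rw [h4]; exact h5) (by rw [h4]; exact hc)
  rw [h2, h4] at hb
  set E := Real.exp (-(|T| * θ) + Real.cos (2 * θ) * X^2 / 2)
  have hE : 0 < E := Real.exp_pos _
  obtain ⟨b1, b2⟩ := hb
  have hTp : 0 < |T| := abs_pos.2 hT
  have s0 := hσ.1
  have s1 : 0 ≤ 1 - σ := sub_nonneg.2 hσ.2
  have hδ := abs_nonneg δ
  have hl : 0 ≤ 2 * Real.pi * |δ| := by positivity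
  interval_cases k
  · have := recur_le δ σ T hσ.1 hT
    simp only [bk, Nat.cast_zero, zero_add, pow_zero, mul_one, if_true]
    refine this.trans ?_
    rw [div_le_iff₀ hTp]
    calc _ ≤ E * ((1 - σ) * (2.73 * X + 3) + σ * (2.73 * X^2 + 3.25)) + 
          2 * Real.pi * |δ| * (E * ((1 - σ) * 2.73 + σ * (2.73 * X + 3))) := by gcongr
      _ = E * ((1 - σ) * (2.73 * X + 3 + 2 * Real.pi * |δ| * 2.73) + 
          σ * (2.73 * X^2 + 3.25 + 2 * Real.pi * |δ| * (2.73 * X + 3))) := by ring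
      _ ≤ E * ((1 - σ) * (3.8 * |T|) + σ * (3.8 * |T|)) := by gcongr
      _ = _ := by ring
  · have e : ((1:ℕ):ℝ) + σ = σ + 1 := by push_cast; ring
    rw [e]
    refine b1.trans ?_
    have : (2.73:ℝ) ≤ 3 * Y := by linarith
    calc _ ≤ E * ((1 - σ) * (3 * Y) + σ * (3 * Y)) := by gcongr
      _ = _ := by simp only [bk]; norm_num; ring_nf; simp
  · have e : ((2:ℕ):ℝ) + σ = σ + 2 := by push_cast; ring
    rw [e]
    refine b2.trans ?_
    have : 2.73 * X + 3 ≤ 3 * Y^2 := by nlinarith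
    calc _ ≤ E * ((1 - σ) * (3 * Y^2) + σ * (3 * Y^2)) := by gcongr
      _ = _ := by simp only [bk]; norm_num; ring_nf; simp

lemma pair (δ σ τ θ X Y g : ℝ) (k : ℕ) (hk : k ≤ 2) (hσ : σ ∈ Icc (0:ℝ) 1)
    (hτ1 : 100 ≤ |τ|) (hτ2 : 4 * Real.pi^2 * |δ| ≤ |τ|)
    (h0 : 0 ≤ θ) (h1 : θ ≤ 0.282) (hX : 0 ≤ X)
    (hA : 2 * Real.pi * |δ| * Real.sin θ ≤ Real.cos (2 * θ) * X)
    (a0 : 2 ≤ Y) (a1 : 2.73 * X + 3 ≤ 3 * Y) (a2 : 2.73 * X^2 + 3.25 ≤ 3 * Y^2)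
    (a3 : 2.73 * X + 3 + 2 * Real.pi * |δ| * 2.73 ≤ 3.8 * |τ|)
    (a4 : 2.73 * X^2 + 3.25 + 2 * Real.pi * |δ| * (2.73 * X + 3) ≤ 3.8 * |τ|)
    (hg : -(|τ| * θ) + Real.cos (2 * θ) * X^2 / 2 ≤ g) (hg2 : -0.16 * |τ| ≤ g) :
    ‖Fdelta δ (((σ : ℂ) + τ * Complex.I) + k)‖
          + ‖Fdelta δ ((k : ℂ) + 1 - ((σ : ℂ) + τ * Complex.I))‖
        ≤ ckconst k * Y ^ k * Real.exp g := by
  have hpi := Real.pi_gt_three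
  have hτ0 : τ ≠ 0 := by
    intro h; rw [h, abs_zero] at hτ1; linarith
  have e1 : ((σ : ℂ) + τ * Complex.I) + k = ((k + σ : ℝ) : ℂ) + τ * Complex.I := by
    push_cast; ring
  have e2 : (k : ℂ) + 1 - ((σ : ℂ) + τ * Complex.I) = ((k + (1 - σ) : ℝ) : ℂ) + (-τ : ℝ) * Complex.I := by
    push_cast; ring
  rw [e1, e2]
  have hσ' : 1 - σ ∈ Icc (0:ℝ) 1 := ⟨by linarith [hσ.2], by linarith [hσ.1]⟩
  have hδ := abs_nonneg δ
  have hl : 6 * (2 * Real.pi * |δ|) ≤ |τ| := by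
    refine le_trans ?_ hτ2
    nlinarith [mul_nonneg (mul_nonneg Real.pi_pos.le hδ) (sub_nonneg.2 hpi.le)]
  have big : ∀ T s : ℝ, |T| = |τ| → s ∈ Icc (0:ℝ) 1 →
      ‖Fdelta δ ((k + s : ℝ) + T * Complex.I)‖ ≤ Real.exp g * (bk k * Y ^ k) := by
    intro T s hT hs
    refine (main_k δ s T θ X Y k hk hs (by rw [← abs_pos, hT]; linarith) h0 h1 hX (Or.inr hA)
      (by linarith) a1 a2 (by rw [hT]; exact a3) (by rw [hT]; exact a4)).trans ?_
    rw [hT]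
    have : 0 ≤ bk k := by unfold bk; split_ifs <;> norm_num
    gcongr
  have small : ∀ T s : ℝ, |T| = |τ| → s ∈ Icc (0:ℝ) 1 → 0 ≤ T * δ →
      ‖Fdelta δ ((k + s : ℝ) + T * Complex.I)‖ ≤ 0.06 * (Real.exp g * (bk k * Y ^ k)) := by
    intro T s hT hs hTδ
    refine (main_k δ s T 0.282 0 Y k hk hs (by rw [← abs_pos, hT]; linarith) (by norm_num) le_rfl le_rfl
      (Or.inl ⟨hTδ, rfl⟩)
      (by linarith) (by linarith) (by nlinarith) (by rw [hT]; linarith) (by rw [hT]; linarith)).trans ?_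
    rw [hT]
    have : 0 ≤ bk k := by unfold bk; split_ifs <;> norm_num
    rw [← mul_assoc 0.06]
    gcongr
    have h16 : (0.06:ℝ) ≥ Real.exp (-12) := by
      have : Real.exp 12 ≥ 20 := by
        have h1 := Real.add_one_le_exp (6:ℝ)
        have h2 : Real.exp 12 = Real.exp 6 * Real.exp 6 := by rw [← Real.exp_add]; norm_num
        rw [h2]; nlinarith
      rw [Real.exp_neg]
      have h3 : (Real.exp 12)⁻¹ ≤ (20:ℝ)⁻¹ := by gcongr
      norm_num at h3 ⊢
      linarith
    calc _ ≤ Real.exp (-12 + g) := by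
          apply Real.exp_le_exp.2
          nlinarith
      _ = Real.exp (-12) * Real.exp g := Real.exp_add _ _
      _ ≤ _ := by gcongr
  have hsum : ‖Fdelta δ (((k + σ : ℝ) : ℂ) + τ * Complex.I)‖ +
      ‖Fdelta δ (((k + (1 - σ) : ℝ) : ℂ) + (-τ : ℝ) * Complex.I)‖ ≤ 1.06 * (Real.exp g * (bk k * Y ^ k)) := by
    rcases le_total 0 (τ * δ) with h | h
    · have := small τ σ rfl hσ h
      have := big (-τ) (1 - σ) (abs_neg τ) hσ'
      linarith
    · have := big τ σ rfl hσ
      have := small (-τ) (1 - σ) (abs_neg τ) hσ' (by linarith)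
      linarith
  refine hsum.trans ?_
  have hbc : 1.06 * bk k ≤ ckconst k := by
    unfold bk ckconst
    interval_cases k <;> norm_num
  have : 0 ≤ Y ^ k * Real.exp g := by positivity
  nlinarith [mul_le_mul_of_nonneg_right hbc this]

set_option maxHeartbeats 2000000 in
/-- **Corollary 3.2**: simplified bounds for the Mellin transform of the twisted Gaussian. -/
theorem mellin_twisted_gaussian_simplified_bound
    (δ σ τ : ℝ) (hσ : σ ∈ Set.Icc (0:ℝ) 1) (hτ : max 100 (4 * Real.pi^2 * |δ|) ≤ |τ|)
    (k : ℕ) (hk : k ≤ 2) :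
    (|τ| < (3/2) * (Real.pi * δ)^2 →
      ‖Fdelta δ (((σ : ℂ) + τ * Complex.I) + k)‖
          + ‖Fdelta δ ((k : ℂ) + 1 - ((σ : ℂ) + τ * Complex.I))‖
        ≤ ckconst k * (|τ| / (2 * Real.pi * |δ|)) ^ k
            * Real.exp (-0.1065 * (τ / (Real.pi * δ))^2)) ∧
    ((3/2) * (Real.pi * δ)^2 ≤ |τ| →
      ‖Fdelta δ (((σ : ℂ) + τ * Complex.I) + k)‖
          + ‖Fdelta δ ((k : ℂ) + 1 - ((σ : ℂ) + τ * Complex.I))‖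
        ≤ ckconst k * |τ| ^ ((k : ℝ) / 2) * Real.exp (-0.1598 * |τ|)) := by
  have ht1 : 100 ≤ |τ| := (le_max_left _ _).trans hτ
  have ht2 : 4 * Real.pi^2 * |δ| ≤ |τ| := (le_max_right _ _).trans hτ
  have hpi := Real.pi_gt_d2
  have hδ0 := abs_nonneg δ
  have hpd : 2 * Real.pi * (2 * Real.pi * |δ|) = 4 * Real.pi^2 * |δ| := by ring
  have hsq : (Real.pi * δ)^2 = (2 * Real.pi * |δ|)^2 / 4 := by
    rw [mul_pow, mul_pow, mul_pow, sq_abs]; ring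
  have hl0 : 0 ≤ 2 * Real.pi * |δ| := by positivity
  obtain ⟨l, hl⟩ : ∃ l, l = 2 * Real.pi * |δ| := ⟨_, rfl⟩
  obtain ⟨t, ht⟩ : ∃ t, t = |τ| := ⟨_, rfl⟩
  have hquot : (τ / (Real.pi * δ))^2 = 4 * (t / l)^2 := by
    rw [div_pow, div_pow, hsq, ht, sq_abs, ← hl]
    by_cases h : l = 0
    · simp [h]
    · field_simp
  have hcs : ∀ θ : ℝ, Real.sin θ ^ 2 = (1 - Real.cos (2 * θ)) / 2 := fun θ => by
    rw [Real.sin_sq, Real.cos_sq]; ring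
  have hcX : ∀ θ : ℝ, 0 < Real.cos (2 * θ) → Real.cos (2 * θ) * (l * Real.sin θ / Real.cos (2 * θ))^2 / 2
      = l^2 * ((1 - Real.cos (2 * θ)) / Real.cos (2 * θ)) / 4 := fun θ hθ => by
    rw [div_pow, mul_pow, hcs]; field_simp; ring
  rw [hsq, hquot, ← hl, ← ht]
  rw [← hpd, ← hl, ← ht] at ht2
  rw [← ht] at ht1
  rw [← hl] at hl0
  have hlt : 6.28 * l ≤ t := le_trans (by nlinarith) ht2
  constructor
  · intro hlt2
    have hlp : 0 < l := by
      rcases hl0.eq_or_lt with h | h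
      · rw [← h] at hlt2; norm_num at hlt2; linarith
      · exact h
    obtain ⟨y, hy⟩ : ∃ y, y = t / l := ⟨_, rfl⟩
    have hyl : t = y * l := by rw [hy]; field_simp
    have hy6 : 6.28 ≤ y := by rw [hy, le_div_iff₀ hlp]; exact hlt
    have hyt : y ≤ 0.375 * l := by
      by_contra h
      push Not at h
      nlinarith
    obtain ⟨θ, hθ⟩ : ∃ θ, θ = 0.752 * y / l := ⟨_, rfl⟩
    have hθl : θ * l = 0.752 * y := by rw [hθ]; field_simp
    have hθ0 : 0 ≤ θ := by rw [hθ]; positivity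
    have hθ1 : θ ≤ 0.282 := by rw [hθ, div_le_iff₀ hlp]; linarith
    have hc := cos_564 (2 * θ) (by linarith) (by linarith)
    have hcp : 0 < Real.cos (2 * θ) := by linarith
    have hsec := sec_bound (2 * θ) (by linarith) (by linarith)
    have hs : Real.sin θ ≤ θ := Real.sin_le hθ0
    have hs0 : 0 ≤ Real.sin θ := Real.sin_nonneg_of_nonneg_of_le_pi hθ0 (by linarith)
    obtain ⟨X, hX⟩ : ∃ X, X = l * Real.sin θ / Real.cos (2 * θ) := ⟨_, rfl⟩
    have hX0 : 0 ≤ X := by rw [hX]; positivity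
    have hX1 : X ≤ 0.89 * y := by
      rw [hX, div_le_iff₀ hcp]
      nlinarith
    have hXX : X^2 ≤ 0.7921 * y^2 := by
      calc X^2 ≤ (0.89 * y)^2 := by gcongr
        _ ≤ _ := by rw [mul_pow]; norm_num
    have hy2 : 6.28 * y ≤ y^2 := by rw [sq]; gcongr
    have hyy : y^2 ≤ 0.375 * t := by rw [hyl]; nlinarith
    rw [← hy]
    refine pair δ σ τ θ X y _ k hk hσ (by rw [← ht]; exact ht1) ?_ hθ0 hθ1 hX0 ?_ (by linarith)
      (by linarith) (by linarith) ?_ ?_ ?_ ?_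
    · rw [← hpd, ← hl, ← ht]; exact ht2
    · rw [← hl, hX]; apply le_of_eq; field_simp
    · rw [← hl, ← ht]; linarith
    · rw [← hl, ← ht]
      have : l * (2.73 * X + 3) ≤ l * (2.91 * y) := by gcongr; linarith
      have e : l * (2.91 * y) = 2.91 * t := by rw [hyl]; ring
      rw [e] at this
      linarith
    · rw [hX, hcX θ hcp, ← ht]
      have h1 : (1 - Real.cos (2 * θ)) / Real.cos (2 * θ) ≤ 0.5764 * (2 * θ)^2 := by
        rw [div_le_iff₀ hcp]; linarith
      have h2 : l^2 * ((1 - Real.cos (2 * θ)) / Real.cos (2 * θ)) ≤ l^2 * (0.5764 * (2 * θ)^2) := by gcongr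
      have h3 : l^2 * (0.5764 * (2 * θ)^2) = 2.3056 * (θ * l)^2 := by ring
      have h4 : t * θ = y * (θ * l) := by rw [hyl]; ring
      rw [h3, hθl] at h2
      rw [h4, hθl]
      rw [mul_pow] at h2
      nlinarith [sq_nonneg y]
    · rw [← ht]; linarith
  · intro hge
    obtain ⟨r, hr⟩ : ∃ r, r = √t := ⟨_, rfl⟩
    have hr2 : t = r^2 := by rw [hr, Real.sq_sqrt (by linarith)]
    have hr0 : 0 ≤ r := by rw [hr]; positivity
    have hr10 : 10 ≤ r := by
      rw [hr]; exact Real.le_sqrt_of_sq_le (by linarith)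
    have hlr : l ≤ 1.633 * r := by
      have h1 : l^2 ≤ (1.633 * r)^2 := by
        rw [mul_pow, ← hr2]; linarith
      exact le_of_sq_le_sq_aux h1 (by positivity)
    have hpow : t ^ ((k:ℝ)/2) = r ^ k := by
      rw [hr, Real.sqrt_eq_rpow, ← Real.rpow_natCast, ← Real.rpow_mul (by linarith)]
      congr 1; ring
    rw [hpow]
    have hc := cos_564 (2 * 0.282) (by norm_num) (by norm_num)
    have hcp : 0 < Real.cos (2 * 0.282) := by linarith
    have hs : Real.sin 0.282 ≤ 0.282 := Real.sin_le (by norm_num)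
    have hs0 : 0 ≤ Real.sin 0.282 := Real.sin_nonneg_of_nonneg_of_le_pi (by norm_num) (by linarith)
    obtain ⟨X, hX⟩ : ∃ X, X = l * Real.sin 0.282 / Real.cos (2 * 0.282) := ⟨_, rfl⟩
    have hX0 : 0 ≤ X := by rw [hX]; positivity
    have hX1 : X ≤ 0.545 * r := by
      rw [hX, div_le_iff₀ hcp]
      nlinarith
    have hXX : X^2 ≤ 0.2971 * r^2 := by
      calc X^2 ≤ (0.545 * r)^2 := by gcongr
        _ ≤ _ := by rw [mul_pow]; nlinarith [sq_nonneg r]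
    have hrr : 10 * r ≤ r^2 := by rw [sq]; gcongr
    refine pair δ σ τ 0.282 X r _ k hk hσ (by rw [← ht]; exact ht1) ?_ (by norm_num) le_rfl hX0 ?_ (by linarith)
      (by linarith) (by linarith) ?_ ?_ ?_ ?_
    · rw [← hpd, ← hl, ← ht]; exact ht2
    · rw [← hl, hX]; apply le_of_eq; field_simp
    · rw [← hl, ← ht, hr2]; linarith
    · rw [← hl, ← ht]
      have : l * (2.73 * X + 3) ≤ (1.633 * r) * (1.788 * r) := by
        apply mul_le_mul hlr (by linarith) (by positivity) (by positivity)
      rw [hr2]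
      have e : (1.633 * r) * (1.788 * r) = 2.919804 * r^2 := by ring
      rw [e] at this
      linarith
    · rw [hX, hcX 0.282 hcp, ← ht]
      have h1 : (1 - Real.cos (2 * 0.282)) / Real.cos (2 * 0.282) ≤ 0.1833 := by
        rw [div_le_iff₀ hcp]; linarith
      have h2 : l^2 * ((1 - Real.cos (2 * 0.282)) / Real.cos (2 * 0.282)) ≤ l^2 * 0.1833 := by gcongr
      linarith
    · rw [← ht]; linarith
end

section
/- For ρ > 0 let j(ρ) = √(1+ρ²), υ(ρ) = √((1+j(ρ))/2), and E(ρ) = ½(arccos(1/υ(ρ)) − 2(υ(ρ)−1)/ρ). Then E(ρ) ≥ ρ/8 − 5ρ³/384 for all ρ > 0. Moreover, E(ρ) = π/4 − β/2 − sin(2β)/(4(1 + sin β)), where β = arcsin(1/υ(ρ)). -/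
open Real

/-- `j(ρ) = √(1+ρ²)`. -/
noncomputable def jfun (ρ : ℝ) : ℝ := Real.sqrt (1 + ρ^2)

/-- `υ(ρ) = √((1+j(ρ))/2)`. -/
noncomputable def upsfun (ρ : ℝ) : ℝ := Real.sqrt ((1 + jfun ρ) / 2)

/-- `E(ρ) = ½(arccos(1/υ(ρ)) − 2(υ(ρ)−1)/ρ)`. -/
noncomputable def Efun (ρ : ℝ) : ℝ :=
  (Real.arccos (1 / upsfun ρ) - 2 * (upsfun ρ - 1) / ρ) / 2

lemma aux_hasDeriv (t : ℝ) (h0 : 0 ≤ t) (h1 : t < 1) :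
    HasDerivAt (fun t : ℝ => 2 * Real.arctan t - t * (1 - t^2) / (1 + t^2)
      - (t * (1 + t^2) / (1 - t^2)^2 - 5 / 3 * (t * (1 + t^2) / (1 - t^2)^2)^3))
      ((1 + 6 * t^2 + t^4) / (1 + t^2)^2 - (1 + 6 * t^2 + t^4) / (1 - t^2)^3 *
        (1 - 5 * (t * (1 + t^2) / (1 - t^2)^2)^2)) t := by
  have hp : (1 + t^2) ≠ 0 := by positivity
  have hm : (1 - t^2) ≠ 0 := by nlinarith
  have hm2 : (1 - t^2)^2 ≠ 0 := pow_ne_zero _ hm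
  have hsq : HasDerivAt (fun t : ℝ => t^2) (2 * t) t := by simpa using hasDerivAt_pow 2 t
  have hP := hsq.const_add 1
  have hM := hsq.const_sub 1
  have hr : HasDerivAt (fun t : ℝ => t * (1 + t^2) / (1 - t^2)^2)
      ((1 + 6 * t^2 + t^4) / (1 - t^2)^3) t := by
    refine HasDerivAt.congr_deriv (((hasDerivAt_id' t).mul hP).div (hM.pow 2) hm2) ?_
    try simp only [Pi.mul_apply, Pi.pow_apply]
    field_simp
    norm_num
    ring
  have hq : HasDerivAt (fun t : ℝ => t * (1 - t^2) / (1 + t^2))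
      (-1 + 2 * (1 - t^2) / (1 + t^2)^2) t := by
    refine HasDerivAt.congr_deriv (((hasDerivAt_id' t).mul hM).div hP hp) ?_
    try simp only [Pi.mul_apply]
    field_simp
    ring
  have hA := (Real.hasDerivAt_arctan t).const_mul 2
  refine HasDerivAt.congr_deriv ((hA.sub hq).sub (hr.sub ((hr.pow 3).const_mul (5/3)))) ?_
  have e : (1 + 6 * t^2 + t^4) / (1 + t^2)^2
      = 2 * (1 / (1 + t^2)) - (-1 + 2 * (1 - t^2) / (1 + t^2)^2) := by
    field_simp
    ring
  rw [e]
  try simp only [Pi.pow_apply]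
  norm_num
  ring

lemma aux_nonneg (t : ℝ) (h0 : 0 ≤ t) (h1 : t < 1) :
    0 ≤ (1 + 6 * t^2 + t^4) / (1 + t^2)^2 - (1 + 6 * t^2 + t^4) / (1 - t^2)^3 *
        (1 - 5 * (t * (1 + t^2) / (1 - t^2)^2)^2) := by
  have hm : 0 < 1 - t^2 := by nlinarith
  have e : (1 + 6 * t^2 + t^4) / (1 + t^2)^2 - (1 + 6 * t^2 + t^4) / (1 - t^2)^3 *
        (1 - 5 * (t * (1 + t^2) / (1 - t^2)^2)^2)
      = (1 + 6 * t^2 + t^4) * (5 * t^2 * ((1 + t^2)^4 - (1 - t^2)^4) +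
          (1 - t^2)^4 * t^4 * (2 - t^2)) / ((1 + t^2)^2 * (1 - t^2)^7) := by
    field_simp
    ring
  rw [e]
  have h4 : 0 ≤ (1 + t^2)^4 - (1 - t^2)^4 := by
    have : (1 + t^2)^4 - (1 - t^2)^4 = 8 * t^2 + 8 * t^6 := by ring
    rw [this]; positivity
  have h2 : 0 ≤ 2 - t^2 := by linarith
  positivity

lemma aux_main (t : ℝ) (h0 : 0 ≤ t) (h1 : t < 1) :
    0 ≤ 2 * Real.arctan t - t * (1 - t^2) / (1 + t^2)
      - (t * (1 + t^2) / (1 - t^2)^2 - 5 / 3 * (t * (1 + t^2) / (1 - t^2)^2)^3) := by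
  have hmono : MonotoneOn (fun t : ℝ => 2 * Real.arctan t - t * (1 - t^2) / (1 + t^2)
      - (t * (1 + t^2) / (1 - t^2)^2 - 5 / 3 * (t * (1 + t^2) / (1 - t^2)^2)^3))
      (Set.Ico 0 1) := by
    apply monotoneOn_of_deriv_nonneg (convex_Ico 0 1)
    · intro x hx
      exact (aux_hasDeriv x hx.1 hx.2).continuousAt.continuousWithinAt
    · intro x hx
      have hx := interior_subset hx
      exact (aux_hasDeriv x hx.1 hx.2).differentiableAt.differentiableWithinAt
    · intro x hx
      have hx := interior_subset hx
      rw [(aux_hasDeriv x hx.1 hx.2).deriv]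
      exact aux_nonneg x hx.1 hx.2
  have := hmono (a := 0) (b := t) (by simp) ⟨h0, h1⟩ h0
  simpa using this

/-- **Lemma 3.3**: lower bound and closed form for `E(ρ)`. -/
theorem Efun_lower_bound_and_eq (ρ : ℝ) (hρ : 0 < ρ) :
    Efun ρ ≥ ρ / 8 - 5 * ρ^3 / 384 ∧
    Efun ρ = Real.pi / 4 - Real.arcsin (1 / upsfun ρ) / 2
      - Real.sin (2 * Real.arcsin (1 / upsfun ρ))
          / (4 * (1 + Real.sin (Real.arcsin (1 / upsfun ρ)))) := by
  have hj2 : jfun ρ ^ 2 = 1 + ρ^2 := Real.sq_sqrt (by positivity)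
  have hj0 : 0 ≤ jfun ρ := Real.sqrt_nonneg _
  have hj1 : 1 < jfun ρ := by nlinarith
  have hu2 : upsfun ρ ^ 2 = (1 + jfun ρ) / 2 := Real.sq_sqrt (by positivity)
  have hu0 : 0 ≤ upsfun ρ := Real.sqrt_nonneg _
  unfold Efun
  generalize upsfun ρ = u at *
  have hu1 : 1 < u := by nlinarith
  have hj : jfun ρ = 2 * u^2 - 1 := by linarith
  rw [hj] at hj2
  obtain ⟨t, ht⟩ : ∃ t, t = √((u - 1) / (u + 1)) := ⟨_, rfl⟩
  have hpos : 0 < (u - 1) / (u + 1) := div_pos (by linarith) (by linarith)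
  have ht0 : 0 < t := by rw [ht]; exact Real.sqrt_pos.2 hpos
  have ht2 : t^2 = (u - 1) / (u + 1) := by rw [ht]; exact Real.sq_sqrt hpos.le
  have hu' : u + 1 ≠ 0 := by linarith
  have hu'' : u ≠ 0 := by linarith
  have hm : 1 - t^2 = 2 / (u + 1) := by rw [ht2]; field_simp; ring
  have hp : 1 + t^2 = 2 * u / (u + 1) := by rw [ht2]; field_simp; ring
  have ht1 : t < 1 := by
    have : 0 < 1 - t^2 := by rw [hm]; positivity
    nlinarith
  have ht2' : t^2 * (u + 1) = u - 1 := by rw [ht2]; field_simp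
  have hr : ρ = 2 * u * (u + 1) * t := by
    rw [← sq_eq_sq₀ hρ.le (by positivity)]
    have : (2 * u * (u + 1) * t)^2 = 4 * u^2 * (u + 1) * (t^2 * (u + 1)) := by ring
    rw [this, ht2']
    linarith
  have harc : Real.arccos (1 / u) = 2 * Real.arctan t := by
    have : 1 / u = Real.cos (2 * Real.arctan t) := by
      rw [Real.cos_two_mul, Real.cos_sq_arctan, hp]
      field_simp
      ring
    rw [this, Real.arccos_cos]
    · have := Real.arctan_pos.2 ht0
      linarith
    · have := Real.arctan_lt_pi_div_two t
      linarith
  have hfrac : 2 * (u - 1) / ρ = t / u := by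
    rw [hr, ← ht2']
    field_simp
  constructor
  · have hmain := aux_main t ht0.le ht1
    have e1 : t * (1 - t^2) / (1 + t^2) = t / u := by
      rw [hm, hp]; field_simp
    have e2 : t * (1 + t^2) / (1 - t^2)^2 = ρ / 4 := by
      rw [hm, hp, hr]; field_simp; norm_num
    rw [e1, e2] at hmain
    rw [harc, hfrac]
    linarith
  · have hs : Real.sin (Real.arcsin (1 / u)) = 1 / u := by
      apply Real.sin_arcsin
      · have : 0 < 1 / u := by positivity
        linarith
      · rw [div_le_one (by linarith)]; exact hu1.le
    have hc : Real.cos (Real.arcsin (1 / u)) = t * (u + 1) / u := by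
      rw [Real.cos_arcsin, Real.sqrt_eq_iff_mul_self_eq_of_pos (by positivity)]
      have : t * (u + 1) / u * (t * (u + 1) / u) = (t^2 * (u+1)) * (u + 1) / u^2 := by ring
      rw [this, ht2']
      field_simp
      ring
    rw [Real.sin_two_mul, hs, hc, hfrac, Real.arccos]
    have : 2 * (1 / u) * (t * (u + 1) / u) / (4 * (1 + 1 / u)) = t / u / 2 := by
      field_simp
      norm_num
    rw [this]
    ring
end

section
/- Let χ be a primitive Dirichlet character mod q, q > 1. Assume that all nontrivial zeros ρ = σ + it of L(s,χ) with |t| ≤ 5/8 satisfy Re(ρ) = 1/2. Then |L'(1,χ)/L(1,χ)| ≤ (5/2) log M(q) + c, where M(q) = max_n |∑_{m≤n} χ(m)| and c = 5 log(2√3 / (ζ(9/4)/ζ(9/8))) = 15.07016…. -/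
open MeasureTheory

/-- `M(q) = max_n |∑_{m ≤ n} χ(m)|`. -/
noncomputable def Mq {q : ℕ} (χ : DirichletCharacter ℂ q) : ℝ :=
  ⨆ n : ℕ, ‖∑ m ∈ Finset.Icc 1 n, χ (m : ZMod q)‖

lemma aux_bc (f : ℂ → ℂ) (A : ℝ) (hA : 0 < A)
    (hf : DifferentiableOn ℂ f (Metric.ball (9/8) (5/8)))
    (hre : ∀ s ∈ Metric.ball (9/8 : ℂ) (5/8), (f s).re ≤ A) (h0 : f (9/8) = 0) :
    ‖deriv f 1‖ ≤ 5 * A := by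
  have hden : ∀ w ∈ Metric.ball (0:ℂ) 1, (5 - w) ≠ 0 := by
    intro w hw h
    rw [sub_eq_zero] at h
    rw [← h] at hw
    norm_num at hw
  -- value bound at `1`
  have hv : ‖f 1‖ ≤ A / 2 := by
    have := Complex.borelCaratheodory_zero (f := fun z => f (9/8 + z)) (M := A) (R := 5/8)
      (z := -(1/8)) hA ?_ ?_ (by norm_num) (by norm_num) (by simpa using h0)
    · norm_num at this
      convert this using 1; ring
    · refine hf.comp (by fun_prop) ?_
      intro z hz
      simpa [Metric.mem_ball, dist_eq_norm] using hz
    · intro z hz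
      apply hre
      simpa [Metric.mem_ball, dist_eq_norm] using hz
  set φ : ℂ → ℂ := fun w => 9/8 + 5/8 * ((5 * w - 1) / (5 - w)) with hφ
  have hφmaps : ∀ w ∈ Metric.ball (0:ℂ) 1, φ w ∈ Metric.ball (9/8 : ℂ) (5/8) := by
    intro w hw
    have hd := hden w hw
    have hw1 : ‖w‖ < 1 := by simpa using hw
    have : ‖5 * w - 1‖ < ‖5 - w‖ := by
      rw [← sq_lt_sq₀ (norm_nonneg _) (norm_nonneg _)]
      have h2 : ‖w‖ ^ 2 < 1 := by nlinarith [norm_nonneg w]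
      rw [Complex.sq_norm, Complex.normSq_apply] at h2
      rw [Complex.sq_norm, Complex.normSq_apply, Complex.sq_norm, Complex.normSq_apply]
      simp
      nlinarith
    have h3 : ‖(5 * w - 1) / (5 - w)‖ < 1 := by
      rw [norm_div, div_lt_one (norm_pos_iff.mpr hd)]; exact this
    rw [Metric.mem_ball, dist_eq_norm]
    simp only [hφ, add_sub_cancel_left]
    rw [norm_mul]
    norm_num at h3 ⊢
    linarith
  have hφd : DifferentiableOn ℂ φ (Metric.ball 0 1) := by
    intro w hw
    have hd := hden w hw
    apply DifferentiableAt.differentiableWithinAt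
    simp only [hφ]
    fun_prop (disch := exact hd)
  have hφ0 : φ 0 = 1 := by simp only [hφ]; norm_num
  have hφ' : HasDerivAt φ (3/5) 0 := by
    have h1 : HasDerivAt (fun w : ℂ => 5 * w - 1) 5 0 := by
      simpa using ((hasDerivAt_id (0:ℂ)).const_mul 5).sub_const 1
    have h2 : HasDerivAt (fun w : ℂ => 5 - w) (-1) 0 := by
      simpa using (hasDerivAt_id (0:ℂ)).const_sub 5
    have := ((h1.div h2 (by norm_num)).const_mul (5/8)).const_add (9/8)
    exact this.congr_deriv (by norm_num)
  have hfd : DifferentiableAt ℂ f 1 := by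
    apply hf.differentiableAt
    apply Metric.isOpen_ball.mem_nhds
    rw [Metric.mem_ball, dist_eq_norm]; norm_num
  set K : ℂ → ℂ := fun w => f (φ w) - f 1 with hK
  have hK' : HasDerivAt K (deriv f 1 * (3/5)) 0 := by
    have h1 : HasDerivAt f (deriv f 1) (φ 0) := by rw [hφ0]; exact hfd.hasDerivAt
    exact (h1.comp 0 hφ').sub_const _
  have hKb : ∀ w ∈ Metric.ball (0:ℂ) 1, ‖K w‖ ≤ 2 * (3/2*A) * ‖w‖ / (1 - ‖w‖) := by
    intro w hw
    apply Complex.borelCaratheodory_zero (f := K) (by positivity) _ _ (by norm_num) hw _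
    · exact (hf.comp hφd hφmaps).sub_const _
    · intro z hz
      have h1 := hre _ (hφmaps z hz)
      have h2 := (Complex.abs_re_le_norm (f 1)).trans hv
      rw [abs_le] at h2
      simp [hK]
      linarith
    · simp [hK, hφ0]
  have hs := (hasDerivAt_iff_tendsto_slope.mp hK').norm
  have hr : Filter.Tendsto (fun w : ℂ => 2 * (3/2*A) / (1 - ‖w‖)) (nhdsWithin 0 {0}ᶜ)
      (nhds (3 * A)) := by
    have : ContinuousAt (fun w : ℂ => 2 * (3/2*A) / (1 - ‖w‖)) 0 := by
      apply ContinuousAt.div <;> first | fun_prop | simp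
    have h := this.tendsto
    simp only [norm_zero, sub_zero, div_one] at h
    convert h.mono_left nhdsWithin_le_nhds using 2
    ring
  have hle := le_of_tendsto_of_tendsto hs hr ?_
  · rw [norm_mul] at hle
    norm_num at hle
    linarith
  · have hb : ∀ᶠ w : ℂ in nhdsWithin 0 {0}ᶜ, w ∈ Metric.ball (0:ℂ) 1 :=
      nhdsWithin_le_nhds (Metric.ball_mem_nhds _ one_pos)
    filter_upwards [hb, self_mem_nhdsWithin] with w hw hw0
    have hw0' : w ≠ 0 := hw0
    have hK0 : K 0 = 0 := by simp [hK, hφ0]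
    have hw1 : ‖w‖ < 1 := by simpa using hw
    have := hKb w hw
    rw [slope_def_field, hK0, sub_zero, sub_zero, norm_div, div_le_iff₀ (norm_pos_iff.mpr hw0')]
    rw [div_mul_eq_mul_div]; exact this

lemma aux_log (L : ℂ → ℂ) (B : ℝ) (hL : Differentiable ℂ L)
    (hne : ∀ s ∈ Metric.ball (9/8 : ℂ) (5/8), L s ≠ 0)
    (hB : ∀ s ∈ Metric.ball (9/8 : ℂ) (5/8), ‖L s‖ ≤ B) (h0 : ‖L (9/8)‖ < B) :
    ‖deriv L 1 / L 1‖ ≤ 5 * Real.log (B / ‖L (9/8)‖) := by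
  have hc : (9/8 : ℂ) ∈ Metric.ball (9/8 : ℂ) (5/8) := by simp
  have hp0 : 0 < ‖L (9/8)‖ := norm_pos_iff.mpr (hne _ hc)
  have h1 : (1 : ℂ) ∈ Metric.ball (9/8 : ℂ) (5/8) := by
    rw [Metric.mem_ball, dist_eq_norm]; norm_num
  have hd : DifferentiableOn ℂ (fun s => deriv L s / L s) (Metric.ball (9/8) (5/8)) := by
    apply DifferentiableOn.div
    · exact (hL.contDiff (n := 2)).differentiable_deriv_two.differentiableOn
    · exact hL.differentiableOn
    · exact hne
  obtain ⟨f, hf0, hf⟩ := (hd.isExactOn_ball).with_val_at (9/8) 0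
  have hconst : ∀ s ∈ Metric.ball (9/8 : ℂ) (5/8), L s * Complex.exp (-f s) = L (9/8) := by
    intro s hs
    have hder : ∀ z ∈ Metric.ball (9/8 : ℂ) (5/8),
        HasDerivAt (fun z => L z * Complex.exp (-f z)) 0 z := by
      intro z hz
      have := (hL z).hasDerivAt.mul (hf z hz).neg.cexp
      refine this.congr_deriv ?_
      have := hne z hz
      field_simp
      ring
    have := Metric.isOpen_ball.is_const_of_deriv_eq_zero
      (convex_ball _ _).isPreconnected (f := fun z => L z * Complex.exp (-f z))
      (fun z hz => (hder z hz).differentiableAt.differentiableWithinAt)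
      (fun z hz => (hder z hz).deriv) hs hc
    simpa [hf0] using this
  have hre : ∀ s ∈ Metric.ball (9/8 : ℂ) (5/8), (f s).re ≤ Real.log (B / ‖L (9/8)‖) := by
    intro s hs
    have h := congrArg norm (hconst s hs)
    rw [norm_mul, Complex.norm_exp, Complex.neg_re, Real.exp_neg] at h
    rw [Real.le_log_iff_exp_le (by apply div_pos _ hp0; linarith), le_div_iff₀ hp0, ← h]
    field_simp
    exact hB s hs
  have hA : 0 < Real.log (B / ‖L (9/8)‖) := Real.log_pos (by rwa [one_lt_div hp0])
  have := aux_bc f _ hA (fun z hz => (hf z hz).differentiableAt.differentiableWithinAt) hre hf0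
  rwa [(hf 1 h1).deriv] at this

lemma aux_zeta_tendsto (x : ℝ) (hx : 1 < x) :
    Filter.Tendsto (fun n : ℕ ↦ ∏ p ∈ Nat.primesBelow n, (1 - (p : ℝ) ^ (-x))⁻¹) Filter.atTop
      (nhds (riemannZeta x).re) := by
  have h := riemannZeta_eulerProduct (s := (x:ℂ)) (by simpa using hx)
  have h2 := (Complex.continuous_re.tendsto _).comp h
  refine h2.congr fun n => ?_
  have : ∏ p ∈ Nat.primesBelow n, (1 - (p : ℂ) ^ (-(x:ℂ)))⁻¹
      = ((∏ p ∈ Nat.primesBelow n, (1 - (p : ℝ) ^ (-x))⁻¹ : ℝ) : ℂ) := by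
    push_cast
    refine Finset.prod_congr rfl fun p _ => ?_
    rw [Complex.ofReal_cpow (by positivity)]
    simp
  simp only [Function.comp_apply, this, Complex.ofReal_re]

lemma aux_zeta_pos (x : ℝ) (hx : 1 < x) : 0 < (riemannZeta x).re := by
  have : (1:ℝ) ≤ (riemannZeta x).re := by
    refine ge_of_tendsto (aux_zeta_tendsto x hx) (Filter.Eventually.of_forall fun n => ?_)
    refine (Finset.prod_const_one (s := Nat.primesBelow n)).symm.le.trans
      (Finset.prod_le_prod (fun _ _ => zero_le_one) fun p hp => ?_)
    have hp := Nat.prime_of_mem_primesBelow hp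
    have h1 : (p:ℝ) ^ (-x) < 1 := Real.rpow_lt_one_of_one_lt_of_neg (by exact_mod_cast hp.one_lt) (by linarith)
    have h2 : 0 < (p:ℝ) ^ (-x) := Real.rpow_pos_of_pos (by exact_mod_cast hp.pos) _
    rw [one_le_inv₀ (by linarith)]
    linarith
  linarith

lemma aux_lower {q : ℕ} [NeZero q] (χ : DirichletCharacter ℂ q) (x : ℝ) (hx : 1 < x) :
    (riemannZeta (2 * x : ℝ)).re ≤ ‖χ.LFunction x‖ * (riemannZeta x).re := by
  have hxs : 1 < (x:ℂ).re := by simpa using hx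
  rw [DirichletCharacter.LFunction_eq_LSeries χ hxs]
  have h1 := (DirichletCharacter.LSeries_eulerProduct χ hxs).norm
  have h2 := aux_zeta_tendsto x hx
  have h3 := aux_zeta_tendsto (2 * x) (by linarith)
  refine le_of_tendsto_of_tendsto h3 (h1.mul h2) (Filter.Eventually.of_forall fun n => ?_)
  simp only
  rw [norm_prod, ← Finset.prod_mul_distrib]
  refine Finset.prod_le_prod ?_ ?_ <;> intro p hp <;> have hp := Nat.prime_of_mem_primesBelow hp
  · have h1 : (p:ℝ) ^ (-(2*x)) < 1 := Real.rpow_lt_one_of_one_lt_of_neg (by exact_mod_cast hp.one_lt) (by linarith)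
    exact inv_nonneg.mpr (by linarith)
  · set y := (p:ℝ) ^ (-x) with hy
    have h1 : y < 1 := Real.rpow_lt_one_of_one_lt_of_neg (by exact_mod_cast hp.one_lt) (by linarith)
    have h0 : 0 < y := Real.rpow_pos_of_pos (by exact_mod_cast hp.pos) _
    have h2 : (p:ℝ) ^ (-(2*x)) = y ^ 2 := by
      rw [hy, ← Real.rpow_natCast, ← Real.rpow_mul (by positivity)]; congr 1; push_cast; ring
    have h4 : ‖χ p * (p:ℂ) ^ (-(x:ℂ))‖ ≤ y := by
      rw [norm_mul, Complex.norm_natCast_cpow_of_pos hp.pos]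
      simp only [Complex.neg_re, Complex.ofReal_re]
      exact mul_le_of_le_one_left h0.le (χ.norm_le_one _)
    have h5 : ‖1 - χ p * (p:ℂ) ^ (-(x:ℂ))‖ ≤ 1 + y := (norm_sub_le _ _).trans (by simpa using h4)
    have h6 : 0 < ‖1 - χ p * (p:ℂ) ^ (-(x:ℂ))‖ := by
      have := norm_sub_norm_le (1:ℂ) (χ p * (p:ℂ) ^ (-(x:ℂ)))
      rw [norm_one] at this
      linarith
    rw [h2, norm_inv, ← mul_inv]
    apply inv_anti₀
    · exact mul_pos h6 (by linarith)
    · nlinarith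

lemma aux_sum_period {q : ℕ} [NeZero q] (χ : DirichletCharacter ℂ q) (hχ : χ ≠ 1) (n : ℕ) :
    ∑ m ∈ Finset.Icc 1 (n + q), χ (m : ZMod q) = ∑ m ∈ Finset.Icc 1 n, χ (m : ZMod q) := by
  induction n with
  | zero =>
    have h0 : ∑ m ∈ Finset.range q, χ (m : ZMod q) = 0 := by
      rw [← MulChar.sum_eq_zero_of_ne_one hχ]
      refine Finset.sum_nbij' (fun m => (m : ZMod q)) (fun a => a.val) ?_ ?_ ?_ ?_ ?_
      · simp
      · intro a _; simpa using ZMod.val_lt a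
      · intro a ha; exact ZMod.val_cast_of_lt (by simpa using ha)
      · intro a _; simp
      · simp
    have h1 := Finset.sum_range_succ (fun m : ℕ => χ (m : ZMod q)) q
    have h2 := Finset.sum_range_succ' (fun m : ℕ => χ (m : ZMod q)) q
    rw [h1, h0] at h2
    simp only [CharP.cast_eq_zero, Nat.cast_zero, zero_add] at h2 ⊢
    have hI : ∀ n : ℕ, ∑ m ∈ Finset.Icc 1 n, χ (m : ZMod q)
        = ∑ k ∈ Finset.range n, χ ((k + 1 : ℕ) : ZMod q) := by
      intro n
      induction n with
      | zero => simp
      | succ n ih => rw [Finset.sum_Icc_succ_top (by omega), ih, Finset.sum_range_succ]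
    rw [hI]
    have h3 : ∑ k ∈ Finset.range q, χ ((k + 1 : ℕ) : ZMod q) = 0 := by
      have := sub_eq_zero.mpr h2
      simpa using this
    simpa using h3
  | succ n ih =>
    rw [add_right_comm, Finset.sum_Icc_succ_top (by omega), ih, Finset.sum_Icc_succ_top (by omega)]
    simp

lemma aux_bdd {q : ℕ} [NeZero q] (χ : DirichletCharacter ℂ q) (hχ : χ ≠ 1) :
    BddAbove (Set.range fun n : ℕ => ‖∑ m ∈ Finset.Icc 1 n, χ (m : ZMod q)‖) := by
  have hp : Function.Periodic (fun n : ℕ => ‖∑ m ∈ Finset.Icc 1 n, χ (m : ZMod q)‖) q :=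
    fun n => congrArg norm (aux_sum_period χ hχ n)
  refine ⟨q, ?_⟩
  rintro _ ⟨n, rfl⟩
  have hm := hp.map_mod_nat n
  simp only at hm ⊢
  rw [← hm]
  refine (norm_sum_le _ _).trans ?_
  refine (Finset.sum_le_sum fun m _ => χ.norm_le_one _).trans ?_
  simp
  exact (Nat.mod_lt n (NeZero.pos q)).le

lemma aux_le_M {q : ℕ} [NeZero q] (χ : DirichletCharacter ℂ q) (hχ : χ ≠ 1) (n : ℕ) :
    ‖∑ m ∈ Finset.Icc 1 n, χ (m : ZMod q)‖ ≤ Mq χ := le_ciSup (aux_bdd χ hχ) n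

lemma aux_one_le_M {q : ℕ} [NeZero q] (χ : DirichletCharacter ℂ q) (hχ : χ ≠ 1) :
    1 ≤ Mq χ := by
  have := aux_le_M χ hχ 1
  simpa using this

lemma aux_le_n {q : ℕ} [NeZero q] (χ : DirichletCharacter ℂ q) (n : ℕ) :
    ‖∑ m ∈ Finset.Icc 1 n, χ (m : ZMod q)‖ ≤ n := by
  refine (norm_sum_le _ _).trans ?_
  refine (Finset.sum_le_sum fun m _ => χ.norm_le_one _).trans ?_
  simp

noncomputable def auxS {q : ℕ} (χ : DirichletCharacter ℂ q) (t : ℝ) : ℂ :=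
  ∑ m ∈ Finset.Icc 1 ⌊t⌋₊, χ (m : ZMod q)

lemma auxS_meas {q : ℕ} (χ : DirichletCharacter ℂ q) : Measurable (auxS χ) := by
  have : Measurable (fun n : ℕ => ∑ m ∈ Finset.Icc 1 n, χ (m : ZMod q)) := measurable_from_top
  exact this.comp Nat.measurable_floor

lemma auxS_zero {q : ℕ} (χ : DirichletCharacter ℂ q) (t : ℝ) (ht : t < 1) : auxS χ t = 0 := by
  have : ⌊t⌋₊ = 0 := Nat.floor_eq_zero.mpr ht
  simp [auxS, this]

lemma aux_mellin {q : ℕ} (χ : DirichletCharacter ℂ q) (s : ℂ) :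
    mellin (auxS χ) (-s) = ∫ t in Set.Ioi (1 : ℝ), auxS χ t * (t:ℂ) ^ (-(s + 1)) := by
  unfold mellin
  rw [← integral_Ici_eq_integral_Ioi (x := 1)]
  have e : ∀ t : ℝ, auxS χ t * (t:ℂ) ^ (-(s + 1)) = (t:ℂ) ^ (-s - 1) • auxS χ t := by
    intro t; rw [smul_eq_mul, mul_comm]; congr 2; ring
  simp_rw [e]
  refine (setIntegral_eq_of_subset_of_forall_sdiff_eq_zero measurableSet_Ioi ?_ ?_)
  · intro t ht; exact lt_of_lt_of_le one_pos (Set.mem_Ici.mp ht)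
  · intro t ht
    rw [auxS_zero χ t (by simpa using ht.2)]; simp

lemma aux_mellin_diff {q : ℕ} [NeZero q] (χ : DirichletCharacter ℂ q) (hχ : χ ≠ 1) (s : ℂ)
    (hs : 0 < s.re) : DifferentiableAt ℂ (mellin (auxS χ)) (-s) := by
  refine mellin_differentiableAt_of_isBigO_rpow (a := 0) (b := -s.re - 1) ?_ ?_ (by simpa using hs)
    ?_ (by simp)
  · apply LocallyIntegrable.locallyIntegrableOn
    have hc : LocallyIntegrable (fun _ : ℝ => Mq χ) := (continuous_const).locallyIntegrable
    refine hc.mono (auxS_meas χ).aestronglyMeasurable (Filter.Eventually.of_forall fun t => ?_)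
    exact (aux_le_M χ hχ _).trans (Real.le_norm_self _)
  · refine Asymptotics.IsBigO.of_bound (Mq χ) (Filter.Eventually.of_forall fun t => ?_)
    simpa using! aux_le_M χ hχ _
  · refine Asymptotics.IsBigO.of_bound 0 ?_
    have : ∀ᶠ t : ℝ in nhdsWithin 0 (Set.Ioi 0), t < 1 :=
      nhdsWithin_le_nhds (gt_mem_nhds one_pos)
    filter_upwards [this] with t ht
    rw [auxS_zero χ t ht]; simp

lemma aux_rep {q : ℕ} [NeZero q] (χ : DirichletCharacter ℂ q) (hχ : χ ≠ 1) (s : ℂ)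
    (hs : 0 < s.re) :
    χ.LFunction s = s * ∫ t in Set.Ioi (1 : ℝ), auxS χ t * (t:ℂ) ^ (-(s + 1)) := by
  rw [← aux_mellin]
  have hop : IsOpen {z : ℂ | 0 < z.re} := isOpen_lt continuous_const Complex.continuous_re
  have h1 : AnalyticOnNhd ℂ χ.LFunction {z : ℂ | 0 < z.re} :=
    (DirichletCharacter.differentiable_LFunction hχ).differentiableOn.analyticOnNhd hop
  have h2 : AnalyticOnNhd ℂ (fun z => z * mellin (auxS χ) (-z)) {z : ℂ | 0 < z.re} := by
    apply DifferentiableOn.analyticOnNhd _ hop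
    intro z hz
    apply DifferentiableAt.differentiableWithinAt
    apply differentiableAt_id.mul
    exact (aux_mellin_diff χ hχ z hz).comp z differentiableAt_id.neg
  refine h1.eqOn_of_preconnected_of_eventuallyEq h2 (convex_halfSpace_re_gt 0).isPreconnected
    (z₀ := 2) (by simp) ?_ hs
  have hn : ∀ᶠ z : ℂ in nhds 2, 1 < z.re :=
    (isOpen_lt continuous_const Complex.continuous_re).mem_nhds (by simp)
  filter_upwards [hn] with z hz
  rw [aux_mellin, DirichletCharacter.LFunction_eq_LSeries χ hz]
  refine LSeries_eq_mul_integral (fun n => χ n) le_rfl (by linarith) ?_ ?_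
  · exact ZMod.LSeriesSummable_of_one_lt_re χ hz
  · refine Asymptotics.IsBigO.of_bound (Mq χ) (Filter.Eventually.of_forall fun t => ?_)
    simpa using aux_le_M χ hχ _

lemma aux_bound {q : ℕ} [NeZero q] (χ : DirichletCharacter ℂ q) (hχ : χ ≠ 1) (s : ℂ)
    (hs : 0 < s.re) (a : ℝ) (ha : a < 1) (has : a ≤ s.re) :
    ‖χ.LFunction s‖ ≤ ‖s‖ * (((Mq χ) ^ (1 - a) - 1) / (1 - a) + (Mq χ) ^ (1 - s.re) / s.re) := by
  rw [aux_rep χ hχ s hs, norm_mul]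
  set M := Mq χ with hM
  have hM1 : 1 ≤ M := aux_one_le_M χ hχ
  have hM0 : 0 < M := by linarith
  refine mul_le_mul_of_nonneg_left ?_ (norm_nonneg _)
  have hmeas : AEStronglyMeasurable (fun t : ℝ => auxS χ t * (t:ℂ) ^ (-(s + 1))) := by
    apply Measurable.aestronglyMeasurable
    exact (auxS_meas χ).mul (by fun_prop)
  have hnorm : ∀ t : ℝ, 0 < t → ‖auxS χ t * (t:ℂ) ^ (-(s + 1))‖ = ‖auxS χ t‖ * t ^ (-s.re - 1) := by
    intro t ht
    rw [norm_mul, Complex.norm_cpow_eq_rpow_re_of_pos ht]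
    congr 2; simp; ring
  have b1 : ∀ t ∈ Set.Ioc 1 M, ‖auxS χ t * (t:ℂ) ^ (-(s + 1))‖ ≤ t ^ (-a) := by
    intro t ht
    have ht0 : 0 < t := by linarith [ht.1]
    rw [hnorm t ht0]
    calc ‖auxS χ t‖ * t ^ (-s.re - 1) ≤ t * t ^ (-s.re - 1) := by
          gcongr
          exact (aux_le_n χ _).trans (Nat.floor_le ht0.le)
      _ = t ^ (-s.re) := by
          rw [Real.rpow_sub_one ht0.ne']; field_simp
      _ ≤ t ^ (-a) := Real.rpow_le_rpow_of_exponent_le ht.1.le (by linarith)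
  have b2 : ∀ t ∈ Set.Ioi M, ‖auxS χ t * (t:ℂ) ^ (-(s + 1))‖ ≤ M * t ^ (-s.re - 1) := by
    intro t ht
    have ht0 : 0 < t := lt_trans hM0 ht
    rw [hnorm t ht0]
    gcongr
    exact aux_le_M χ hχ _
  have i1 : IntegrableOn (fun t : ℝ => t ^ (-a)) (Set.Ioc 1 M) := by
    rw [← intervalIntegrable_iff_integrableOn_Ioc_of_le hM1]
    apply intervalIntegral.intervalIntegrable_rpow
    right; rw [Set.uIcc_of_le hM1]; intro h; linarith [h.1]
  have i2 : IntegrableOn (fun t : ℝ => M * t ^ (-s.re - 1)) (Set.Ioi M) :=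
    (integrableOn_Ioi_rpow_of_lt (by linarith) hM0).const_mul M
  have j1 : IntegrableOn (fun t : ℝ => auxS χ t * (t:ℂ) ^ (-(s + 1))) (Set.Ioc 1 M) :=
    Integrable.mono' i1 hmeas.restrict ((ae_restrict_iff' measurableSet_Ioc).mpr (Filter.Eventually.of_forall b1))
  have j2 : IntegrableOn (fun t : ℝ => auxS χ t * (t:ℂ) ^ (-(s + 1))) (Set.Ioi M) :=
    Integrable.mono' i2 hmeas.restrict ((ae_restrict_iff' measurableSet_Ioi).mpr (Filter.Eventually.of_forall b2))
  rw [← Set.Ioc_union_Ioi_eq_Ioi hM1, setIntegral_union (Set.Ioc_disjoint_Ioi le_rfl) measurableSet_Ioi j1 j2]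
  refine (norm_add_le _ _).trans (add_le_add ?_ ?_)
  · refine (norm_integral_le_of_norm_le i1 ((ae_restrict_iff' measurableSet_Ioc).mpr (Filter.Eventually.of_forall b1))).trans ?_
    rw [← intervalIntegral.integral_of_le hM1, integral_rpow (Or.inl (by linarith))]
    rw [Real.one_rpow]
    rw [show -a + 1 = 1 - a by ring]
  · refine (norm_integral_le_of_norm_le i2 ((ae_restrict_iff' measurableSet_Ioi).mpr (Filter.Eventually.of_forall b2))).trans ?_
    rw [integral_const_mul, integral_Ioi_rpow_of_lt (by linarith) hM0]
    apply le_of_eq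
    rw [show -s.re - 1 + 1 = -s.re by ring, Real.rpow_sub hM0, Real.rpow_neg hM0.le, Real.rpow_one]
    field_simp

lemma aux_disc_bound {q : ℕ} [NeZero q] (χ : DirichletCharacter ℂ q) (hχ : χ ≠ 1) (s : ℂ)
    (hs : s ∈ Metric.ball (9/8 : ℂ) (5/8)) :
    ‖χ.LFunction s‖ ≤ 17/5 * Real.sqrt (Mq χ) := by
  have hM1 := aux_one_le_M χ hχ
  have hb := aux_bound χ hχ s
  set M := Mq χ with hM
  have hM0 : 0 < M := by linarith
  set x := s.re with hx
  have hd : (x - 9/8)^2 + s.im^2 < 25/64 := by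
    rw [Metric.mem_ball, dist_eq_norm] at hs
    have h2 : ‖s - 9/8‖ ^ 2 < (5/8)^2 := by gcongr
    rw [Complex.sq_norm, Complex.normSq_apply] at h2
    norm_num at h2
    simp only [hx]; nlinarith
  have hx1 : 1/2 < x := by nlinarith [sq_nonneg s.im]
  have hx2 : x < 7/4 := by nlinarith [sq_nonneg s.im]
  have hns : ‖s‖ ^ 2 ≤ 9/4 * x - 7/8 := by
    rw [Complex.sq_norm, Complex.normSq_apply]; nlinarith
  have hsq : 1 ≤ Real.sqrt M := Real.one_le_sqrt.mpr hM1
  have hrp : M ^ (1 - x) ≤ Real.sqrt M := by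
    rw [Real.sqrt_eq_rpow]; exact Real.rpow_le_rpow_of_exponent_le hM1 (by linarith)
  -- reduction
  have key : ∀ c : ℝ, 0 ≤ c → (9/4 * x - 7/8) * (c * x + 1)^2 ≤ 289/25 * x^2 →
      ‖χ.LFunction s‖ ≤ ‖s‖ * (c * Real.sqrt M + Real.sqrt M / x) →
      ‖χ.LFunction s‖ ≤ 17/5 * Real.sqrt M := by
    intro c hc h1 h2
    refine h2.trans ?_
    have h3 : ‖s‖ * (c * x + 1) ≤ 17/5 * x := by
      apply le_of_sq_le_sq _ (by linarith)
      nlinarith [sq_nonneg (c * x + 1)]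
    have : ‖s‖ * (c * Real.sqrt M + Real.sqrt M / x) = (‖s‖ * (c * x + 1)) / x * Real.sqrt M := by
      field_simp
    rw [this]
    refine mul_le_mul_of_nonneg_right ?_ (Real.sqrt_nonneg _)
    rw [div_le_iff₀ (by linarith)]; exact h3
  rcases le_total x (3/4) with h | h
  · refine key 2 (by norm_num) (by nlinarith [mul_nonneg (sub_nonneg.2 hx1.le) (sub_nonneg.2 h)]) ?_
    refine (hb (by linarith) (1/2) (by norm_num) (by linarith)).trans ?_
    gcongr
    rw [show (1:ℝ) - 1/2 = 1/2 by norm_num, ← Real.sqrt_eq_rpow]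
    linarith
  · refine key 1 (by norm_num) (by nlinarith [mul_nonneg (sub_nonneg.2 hx2.le) (sub_nonneg.2 h)]) ?_
    refine (hb (by linarith) (3/4) (by norm_num) (by linarith)).trans ?_
    gcongr
    set y := M ^ ((1:ℝ) - 3/4) with hy
    have : Real.sqrt M = y ^ 2 := by
      rw [hy, ← Real.rpow_natCast, ← Real.rpow_mul hM0.le, Real.sqrt_eq_rpow]; norm_num
    rw [this, div_le_iff₀ (by norm_num)]
    nlinarith [sq_nonneg (y - 2)]

/-- **Lemma 4.2**: bound on `L'(1,χ)/L(1,χ)` from a partial GRH verification. -/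
theorem LlogDeriv_at_one_bound
    (q : ℕ) [NeZero q] (hq : 1 < q)
    (χ : DirichletCharacter ℂ q) (hχ : χ.IsPrimitive)
    (hGRH : ∀ ρ : ℂ, χ.LFunction ρ = 0 → 0 < ρ.re → ρ.re < 1 → |ρ.im| ≤ 5/8 →
      ρ.re = 1/2) :
    ‖deriv (DirichletCharacter.LFunction χ) 1 / DirichletCharacter.LFunction χ 1‖
      ≤ (5/2) * Real.log (Mq χ)
        + 5 * Real.log (2 * Real.sqrt 3 / ((riemannZeta (9/4)).re / (riemannZeta (9/8)).re)) := by
  have hχ1 : χ ≠ 1 := by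
    rintro rfl
    rw [DirichletCharacter.isPrimitive_def, DirichletCharacter.conductor_one] at hχ
    omega
  have hM1 := aux_one_le_M χ hχ1
  have hlow := aux_lower χ (9/8) (by norm_num)
  have hz1 := aux_zeta_pos (9/8) (by norm_num)
  have hz2 := aux_zeta_pos (9/4) (by norm_num)
  rw [show (2 * (9/8) : ℝ) = 9/4 by norm_num] at hlow
  push_cast at hlow hz1 hz2
  set M := Mq χ
  set a := (riemannZeta (9/4)).re
  set b := (riemannZeta (9/8)).re
  have hM0 : 0 < Real.sqrt M := Real.sqrt_pos.mpr (by linarith)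
  have h3 : 17/5 < 2 * Real.sqrt 3 := by
    have : 17/10 < Real.sqrt 3 := Real.lt_sqrt_of_sq_lt (by norm_num)
    linarith
  have hlt : ∀ s ∈ Metric.ball (9/8 : ℂ) (5/8), ‖χ.LFunction s‖ < 2 * Real.sqrt 3 * Real.sqrt M :=
    fun s hs => (aux_disc_bound χ hχ1 s hs).trans_lt (mul_lt_mul_of_pos_right h3 hM0)
  have hne : ∀ s ∈ Metric.ball (9/8 : ℂ) (5/8), χ.LFunction s ≠ 0 := by
    intro s hs h0
    have h2 : ‖s - 9/8‖ < 5/8 := by rwa [Metric.mem_ball, dist_eq_norm] at hs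
    have hre := (Complex.abs_re_le_norm (s - 9/8)).trans_lt h2
    have him := (Complex.abs_im_le_norm (s - 9/8)).trans_lt h2
    norm_num at hre him
    rw [abs_lt] at hre
    by_cases h1 : 1 ≤ s.re
    · exact DirichletCharacter.LFunction_ne_zero_of_one_le_re χ (.inl hχ1) h1 h0
    · have := hGRH s h0 (by linarith) (by linarith) him.le
      linarith
  have hc : (9/8 : ℂ) ∈ Metric.ball (9/8 : ℂ) (5/8) := by simp
  have hp0 : 0 < ‖χ.LFunction (9/8)‖ := norm_pos_iff.mpr (hne _ hc)
  have hmain := aux_log χ.LFunction (2 * Real.sqrt 3 * Real.sqrt M)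
    (DirichletCharacter.differentiable_LFunction hχ1) hne (fun s hs => (hlt s hs).le) (hlt _ hc)
  refine hmain.trans ?_
  have hs3 : 0 < 2 * Real.sqrt 3 := by linarith
  have e : (5/2) * Real.log M + 5 * Real.log (2 * Real.sqrt 3 / (a / b))
      = 5 * Real.log (2 * Real.sqrt 3 * Real.sqrt M / (a / b)) := by
    rw [mul_div_right_comm (2 * Real.sqrt 3) (Real.sqrt M), Real.log_mul (by positivity) hM0.ne', Real.log_sqrt (by linarith)]
    ring
  rw [e]
  have hab : a / b ≤ ‖χ.LFunction (9/8)‖ := by rwa [div_le_iff₀ hz1]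
  gcongr
end
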